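/- arXiv:2604.09950 — 8 statements merged into one kernel-verified Lean document; each statement's English description precedes it below -/
import Mathlib

section
/- A function C : [0,1]×[0,1] → [0,1] is a bivariate copula if and only if there exists a family (h_v)_{v∈[0,1]} of Lebesgue-measurable functions h_v : [0,1] → [0,1] such that (i) C(v,u) = ∫₀ᵘ h_v(t) dt for all (v,u) ∈ [0,1]², (ii) for every t ∈ [0,1] the map v ↦ h_v(t) is monotone increasing, and (iii) ∫₀¹ h_v(t) dt = v for every v ∈ [0,1]. -/
open MeasureTheory Set

noncomputable section

/-- A bivariate copula: a function `[0,1]² → [0,1]` (encoded on `ℝ × ℝ`, with all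
conditions imposed on `[0,1]²`) with the copula boundary conditions and the
2-increasing property. -/
def IsCopula (C : ℝ → ℝ → ℝ) : Prop :=
  (∀ v ∈ Icc (0:ℝ) 1, ∀ u ∈ Icc (0:ℝ) 1, C v u ∈ Icc (0:ℝ) 1) ∧
  (∀ v ∈ Icc (0:ℝ) 1, C v 0 = 0) ∧
  (∀ u ∈ Icc (0:ℝ) 1, C 0 u = 0) ∧
  (∀ v ∈ Icc (0:ℝ) 1, C v 1 = v) ∧
  (∀ u ∈ Icc (0:ℝ) 1, C 1 u = u) ∧
  (∀ v₁ v₂ u₁ u₂ : ℝ, 0 ≤ v₁ → v₁ ≤ v₂ → v₂ ≤ 1 → 0 ≤ u₁ → u₁ ≤ u₂ → u₂ ≤ 1 →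
    0 ≤ C v₂ u₂ - C v₁ u₂ - C v₂ u₁ + C v₁ u₁)

/-- A derivative family `(h_v)_{v ∈ [0,1]}` for a copula `C`:
each `h_v : [0,1] → [0,1]` is Lebesgue measurable, `C(v,u) = ∫₀ᵘ h_v(t) dt`,
`v ↦ h_v(t)` is increasing, and `∫₀¹ h_v(t) dt = v`. -/
def IsDerivFamily (C : ℝ → ℝ → ℝ) (h : ℝ → ℝ → ℝ) : Prop :=
  (∀ v ∈ Icc (0:ℝ) 1, Measurable (h v)) ∧
  (∀ v ∈ Icc (0:ℝ) 1, ∀ t ∈ Icc (0:ℝ) 1, h v t ∈ Icc (0:ℝ) 1) ∧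
  (∀ v ∈ Icc (0:ℝ) 1, ∀ u ∈ Icc (0:ℝ) 1, C v u = ∫ t in (0:ℝ)..u, h v t) ∧
  (∀ t ∈ Icc (0:ℝ) 1, MonotoneOn (fun v => h v t) (Icc (0:ℝ) 1)) ∧
  (∀ v ∈ Icc (0:ℝ) 1, (∫ t in (0:ℝ)..1, h v t) = v)

/-!
The 2-increasing property says that the increments of `C v` grow with `v`. Comparing `v` with the
margins `C 0 u = 0` and `C 1 u = u` shows that `C v` is increasing and 1-Lipschitz, hence the
integral of its a.e. derivative. Choosing the upper derivative, defined at every point, turns the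
comparison of increments into monotonicity of `v ↦ h_v(t)` for every `t`, not merely almost every
`t`. Conversely, integrating `0 ≤ h_v ≤ h_w` and `h_v ≤ 1` recovers all increment comparisons, and
the margins are forced by the values at the endpoints.
-/

open Filter
open scoped Topology NNReal Interval

section UpperDerivative

/-- The upper derivative of `f` at `t` along the steps `1 / (n + 1)`. It stands in for `deriv f`,
whose default value `0` at points of non-differentiability would break monotonicity in `f`
(`seqUpperDeriv_le_seqUpperDeriv`); the countable family of steps makes measurability immediate.
The value is meaningful only if the difference quotients are bounded, e.g. for Lipschitz `f`. -/
def seqUpperDeriv (f : ℝ → ℝ) (t : ℝ) : ℝ :=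
  limsup (fun n : ℕ => slope f t (t + 1 / ((n : ℝ) + 1))) atTop

variable {f g : ℝ → ℝ} {K L : ℝ≥0}

lemma abs_slope_le_of_lipschitzWith (hf : LipschitzWith K f) (a b : ℝ) : |slope f a b| ≤ K := by
  rw [slope_def_field, abs_div]
  exact div_le_of_le_mul₀ (abs_nonneg _) K.coe_nonneg (hf.dist_le_mul b a)

lemma slope_le_slope_of_monotone_sub (h : Monotone (g - f)) (a b : ℝ) :
    slope f a b ≤ slope g a b := by
  have h_sub : slope (g - f) a b = slope g a b - slope f a b := by
    simp only [slope_def_field, Pi.sub_apply]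
    ring
  exact sub_nonneg.1 (h_sub ▸ (h.monotoneOn univ).slope_nonneg trivial trivial)

lemma isBoundedUnder_le_slope_of_lipschitzWith (hf : LipschitzWith K f) (t : ℝ) {ι : Type*}
    (l : Filter ι) (x : ι → ℝ) : IsBoundedUnder (· ≤ ·) l fun n => slope f t (x n) :=
  isBoundedUnder_of ⟨K, fun n => (abs_le.1 (abs_slope_le_of_lipschitzWith hf t (x n))).2⟩

lemma isCoboundedUnder_le_slope_of_lipschitzWith (hf : LipschitzWith K f) (t : ℝ) {ι : Type*}
    (l : Filter ι) [l.NeBot] (x : ι → ℝ) : IsCoboundedUnder (· ≤ ·) l fun n => slope f t (x n) :=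
  IsBoundedUnder.isCoboundedUnder_le <|
    isBoundedUnder_of ⟨-K, fun n => (abs_le.1 (abs_slope_le_of_lipschitzWith hf t (x n))).1⟩

lemma measurable_seqUpperDeriv (hf : Measurable f) : Measurable (seqUpperDeriv f) := by
  refine Measurable.limsup fun n => ?_
  simp only [slope_def_field]
  fun_prop

lemma seqUpperDeriv_eq_of_hasDerivAt {f' t : ℝ} (hf : HasDerivAt f f' t) :
    seqUpperDeriv f t = f' := by
  have h_steps : Tendsto (fun n : ℕ => t + 1 / ((n : ℝ) + 1)) atTop (𝓝[≠] t) := by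
    refine tendsto_nhdsWithin_iff.2 ⟨?_, Eventually.of_forall fun n => ?_⟩
    · simpa only [add_zero] using tendsto_one_div_add_atTop_nhds_zero_nat.const_add t
    · exact (lt_add_of_pos_right t Nat.one_div_pos_of_nat).ne'
  exact ((hasDerivAt_iff_tendsto_slope.1 hf).comp h_steps).limsup_eq

lemma seqUpperDeriv_le_seqUpperDeriv (hf : LipschitzWith K f) (hg : LipschitzWith L g)
    (hfg : Monotone (g - f)) (t : ℝ) : seqUpperDeriv f t ≤ seqUpperDeriv g t :=
  limsup_le_limsup (Eventually.of_forall fun _ => slope_le_slope_of_monotone_sub hfg _ _)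
    (isCoboundedUnder_le_slope_of_lipschitzWith hf _ _ _)
    (isBoundedUnder_le_slope_of_lipschitzWith hg _ _ _)

lemma seqUpperDeriv_nonneg (hf : LipschitzWith K f) (hmono : Monotone f) (t : ℝ) :
    0 ≤ seqUpperDeriv f t :=
  le_limsup_of_frequently_le
    (Frequently.of_forall fun _ => (hmono.monotoneOn univ).slope_nonneg trivial trivial)
    (isBoundedUnder_le_slope_of_lipschitzWith hf _ _ _)

lemma seqUpperDeriv_le_of_lipschitzWith (hf : LipschitzWith K f) (t : ℝ) :
    seqUpperDeriv f t ≤ K :=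
  limsup_le_of_le (isCoboundedUnder_le_slope_of_lipschitzWith hf _ _ _)
    (Eventually.of_forall fun _ => (abs_le.1 (abs_slope_le_of_lipschitzWith hf _ _)).2)

lemma integral_seqUpperDeriv_eq_sub (hf : LipschitzWith K f) (a b : ℝ) :
    ∫ t in a..b, seqUpperDeriv f t = f b - f a := by
  have h_ae : ∀ᵐ t, t ∈ Ι a b → seqUpperDeriv f t = deriv f t := by
    filter_upwards [hf.ae_differentiableAt_real] with t ht _
    exact seqUpperDeriv_eq_of_hasDerivAt ht.hasDerivAt
  have h_ac : AbsolutelyContinuousOnInterval f a b :=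
    hf.lipschitzOnWith.absolutelyContinuousOnInterval
  rw [intervalIntegral.integral_congr_ae h_ae, h_ac.integral_deriv_eq_sub]

end UpperDerivative

section FunctionsOnIntervals

lemma lipschitzOnWith_one_of_monotoneOn_id_sub {f : ℝ → ℝ} {s : Set ℝ}
    (hf : MonotoneOn f s) (hid : MonotoneOn (id - f) s) : LipschitzOnWith 1 f s := by
  refine LipschitzOnWith.of_le_add fun x hx y hy => ?_
  rcases le_total x y with hxy | hyx
  · exact (hf hx hy hxy).trans (le_add_of_nonneg_right dist_nonneg)
  · have h_incr : y - f y ≤ x - f x := hid hy hx hyx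
    rw [Real.dist_eq, abs_of_nonneg (sub_nonneg.2 hyx)]
    linarith

lemma monotone_IccExtend_domRestrict {α β : Type*} [LinearOrder α] [Preorder β] {f : α → β}
    {a b : α} (hab : a ≤ b) (hf : MonotoneOn f (Icc a b)) :
    Monotone (IccExtend hab ((Icc a b).domRestrict f)) :=
  Monotone.IccExtend hab fun s t hst => hf s.2 t.2 hst

lemma lipschitzWith_IccExtend_domRestrict {α : Type*} [PseudoEMetricSpace α] {f : ℝ → α}
    {K : ℝ≥0} {a b : ℝ} (hab : a ≤ b) (hf : LipschitzOnWith K f (Icc a b)) :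
    LipschitzWith K (IccExtend hab ((Icc a b).domRestrict f)) := by
  simpa only [mul_one] using! hf.to_restrict.comp (LipschitzWith.projIcc hab)

lemma monotoneOn_integral_of_nonneg {f : ℝ → ℝ} {a b : ℝ}
    (hint : IntervalIntegrable f volume a b) (hf : ∀ t ∈ Icc a b, 0 ≤ f t) :
    MonotoneOn (fun u => ∫ t in a..u, f t) (Icc a b) := by
  intro u hu w hw huw
  have hint_to {x : ℝ} (hx : x ∈ Icc a b) : IntervalIntegrable f volume a x :=
    hint.mono_set (uIcc_subset_uIcc_left (Icc_subset_uIcc hx))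
  rw [← sub_nonneg, intervalIntegral.integral_interval_sub_left (hint_to hw) (hint_to hu)]
  exact intervalIntegral.integral_nonneg huw fun t ht => hf t ⟨hu.1.trans ht.1, ht.2.trans hw.2⟩

end FunctionsOnIntervals

namespace IsCopula

variable {C : ℝ → ℝ → ℝ} {v w : ℝ}

lemma monotoneOn_sub (hC : IsCopula C) (hv : 0 ≤ v) (hvw : v ≤ w) (hw : w ≤ 1) :
    MonotoneOn (C w - C v) (Icc 0 1) := by
  obtain ⟨-, -, -, -, -, h_incr⟩ := hC
  intro a ha b hb hab
  have h_rect := h_incr v w a b hv hvw hw ha.1 hab hb.2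
  simp only [Pi.sub_apply]
  linarith

lemma monotoneOn (hC : IsCopula C) (hv : v ∈ Icc (0 : ℝ) 1) : MonotoneOn (C v) (Icc 0 1) := by
  refine (hC.monotoneOn_sub le_rfl hv.1 hv.2).congr fun u hu => ?_
  obtain ⟨-, -, h_zero_left, -⟩ := hC
  rw [Pi.sub_apply, h_zero_left u hu, sub_zero]

lemma monotoneOn_id_sub (hC : IsCopula C) (hv : v ∈ Icc (0 : ℝ) 1) :
    MonotoneOn (id - C v) (Icc 0 1) := by
  refine (hC.monotoneOn_sub hv.1 hv.2 le_rfl).congr fun u hu => ?_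
  obtain ⟨-, -, -, -, h_one_left, -⟩ := hC
  rw [Pi.sub_apply, Pi.sub_apply, h_one_left u hu, id]

lemma lipschitzOnWith (hC : IsCopula C) (hv : v ∈ Icc (0 : ℝ) 1) :
    LipschitzOnWith 1 (C v) (Icc 0 1) :=
  lipschitzOnWith_one_of_monotoneOn_id_sub (hC.monotoneOn hv) (hC.monotoneOn_id_sub hv)

/-- The section `C v` on `[0,1]`, extended to `ℝ` by its endpoint values. This discards the
arbitrary values of `C v` off `[0,1]`, which difference quotients at `t = 1` would see. -/
def extendedSection (C : ℝ → ℝ → ℝ) (v : ℝ) : ℝ → ℝ :=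
  IccExtend zero_le_one ((Icc 0 1).domRestrict (C v))

lemma extendedSection_of_mem {u : ℝ} (hu : u ∈ Icc (0 : ℝ) 1) : extendedSection C v u = C v u :=
  IccExtend_of_mem _ _ hu

lemma lipschitzWith_extendedSection (hC : IsCopula C) (hv : v ∈ Icc (0 : ℝ) 1) :
    LipschitzWith 1 (extendedSection C v) :=
  lipschitzWith_IccExtend_domRestrict zero_le_one (hC.lipschitzOnWith hv)

lemma integral_seqUpperDeriv_extendedSection (hC : IsCopula C) (hv : v ∈ Icc (0 : ℝ) 1) {u : ℝ}
    (hu : u ∈ Icc (0 : ℝ) 1) :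
    ∫ t in (0 : ℝ)..u, seqUpperDeriv (extendedSection C v) t = C v u := by
  have h_zero_right : C v 0 = 0 := hC.2.1 v hv
  rw [integral_seqUpperDeriv_eq_sub (hC.lipschitzWith_extendedSection hv),
    extendedSection_of_mem hu, extendedSection_of_mem (left_mem_Icc.2 zero_le_one), h_zero_right,
    sub_zero]

lemma isDerivFamily_seqUpperDeriv (hC : IsCopula C) :
    IsDerivFamily C fun v => seqUpperDeriv (extendedSection C v) := by
  have h_lip {v : ℝ} (hv : v ∈ Icc (0 : ℝ) 1) := hC.lipschitzWith_extendedSection hv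
  have h_integral {v : ℝ} (hv : v ∈ Icc (0 : ℝ) 1) {u : ℝ} (hu : u ∈ Icc (0 : ℝ) 1) :=
    hC.integral_seqUpperDeriv_extendedSection hv hu
  refine ⟨fun v hv => ?measurable, fun v hv t _ => ⟨?nonneg, ?le_one⟩,
    fun v hv u hu => (h_integral hv hu).symm, fun t _ v hv w hw hvw => ?mono, fun v hv => ?total⟩
  case measurable => exact measurable_seqUpperDeriv (h_lip hv).continuous.measurable
  case nonneg =>
    exact seqUpperDeriv_nonneg (h_lip hv)
      (monotone_IccExtend_domRestrict zero_le_one (hC.monotoneOn hv)) t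
  case le_one => exact seqUpperDeriv_le_of_lipschitzWith (h_lip hv) t
  case mono =>
    exact seqUpperDeriv_le_seqUpperDeriv (h_lip hv) (h_lip hw)
      (monotone_IccExtend_domRestrict zero_le_one (hC.monotoneOn_sub hv.1 hvw hw.2)) t
  case total =>
    obtain ⟨-, -, -, h_one_right, -⟩ := hC
    rw [h_integral hv (right_mem_Icc.2 zero_le_one), h_one_right v hv]

end IsCopula

namespace IsDerivFamily

variable {C h : ℝ → ℝ → ℝ} {v w : ℝ}

lemma intervalIntegrable (hh : IsDerivFamily C h) (hv : v ∈ Icc (0 : ℝ) 1) {u : ℝ}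
    (hu : u ∈ Icc (0 : ℝ) 1) : IntervalIntegrable (h v) volume 0 u := by
  obtain ⟨h_meas, h_mem, -⟩ := hh
  have h_ae : ∀ᵐ t ∂volume.restrict (Icc (0 : ℝ) 1), h v t ∈ Icc (0 : ℝ) 1 :=
    ae_restrict_of_forall_mem measurableSet_Icc (h_mem v hv)
  have h_int : IntegrableOn (h v) (Icc 0 1) :=
    Integrable.of_mem_Icc 0 1 (h_meas v hv).aemeasurable h_ae
  exact (h_int.mono_set (uIcc_subset_Icc (left_mem_Icc.2 zero_le_one) hu)).intervalIntegrable

lemma monotoneOn_sub (hh : IsDerivFamily C h) (hv : v ∈ Icc (0 : ℝ) 1) (hw : w ∈ Icc (0 : ℝ) 1)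
    (hvw : v ≤ w) : MonotoneOn (C w - C v) (Icc 0 1) := by
  have h_int {x : ℝ} (hx : x ∈ Icc (0 : ℝ) 1) {u : ℝ} (hu : u ∈ Icc (0 : ℝ) 1) :=
    hh.intervalIntegrable hx hu
  have one_mem : (1 : ℝ) ∈ Icc (0 : ℝ) 1 := right_mem_Icc.2 zero_le_one
  obtain ⟨-, -, h_integral, h_mono, -⟩ := hh
  refine (monotoneOn_integral_of_nonneg ((h_int hw one_mem).sub (h_int hv one_mem))
    fun t ht => sub_nonneg.2 (h_mono t ht hv hw hvw)).congr fun u hu => ?_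
  simp only [Pi.sub_apply, h_integral w hw u hu, h_integral v hv u hu]
  exact intervalIntegral.integral_sub (h_int hw hu) (h_int hv hu)

lemma monotoneOn (hh : IsDerivFamily C h) (hv : v ∈ Icc (0 : ℝ) 1) :
    MonotoneOn (C v) (Icc 0 1) := by
  have h_int := hh.intervalIntegrable hv (right_mem_Icc.2 zero_le_one)
  obtain ⟨-, h_mem, h_integral, -⟩ := hh
  exact (monotoneOn_integral_of_nonneg h_int fun t ht => (h_mem v hv t ht).1).congr
    fun u hu => (h_integral v hv u hu).symm

lemma monotoneOn_id_sub (hh : IsDerivFamily C h) (hv : v ∈ Icc (0 : ℝ) 1) :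
    MonotoneOn (id - C v) (Icc 0 1) := by
  have h_int {u : ℝ} (hu : u ∈ Icc (0 : ℝ) 1) := hh.intervalIntegrable hv hu
  obtain ⟨-, h_mem, h_integral, -⟩ := hh
  refine (monotoneOn_integral_of_nonneg
    (intervalIntegrable_const.sub (h_int (right_mem_Icc.2 zero_le_one)))
    fun t ht => sub_nonneg.2 (h_mem v hv t ht).2).congr fun u hu => ?_
  simp only [Pi.sub_apply, id, h_integral v hv u hu]
  rw [intervalIntegral.integral_sub intervalIntegrable_const (h_int hu), integral_one, sub_zero]

lemma apply_zero (hh : IsDerivFamily C h) (hv : v ∈ Icc (0 : ℝ) 1) : C v 0 = 0 := by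
  obtain ⟨-, -, h_integral, -⟩ := hh
  rw [h_integral v hv 0 (left_mem_Icc.2 zero_le_one), intervalIntegral.integral_same]

lemma apply_one (hh : IsDerivFamily C h) (hv : v ∈ Icc (0 : ℝ) 1) : C v 1 = v := by
  obtain ⟨-, -, h_integral, -, h_total⟩ := hh
  rw [h_integral v hv 1 (right_mem_Icc.2 zero_le_one), h_total v hv]

lemma apply_mem_Icc (hh : IsDerivFamily C h) (hv : v ∈ Icc (0 : ℝ) 1) {u : ℝ}
    (hu : u ∈ Icc (0 : ℝ) 1) : C v u ∈ Icc 0 v := by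
  have h_lower := hh.monotoneOn hv (left_mem_Icc.2 zero_le_one) hu hu.1
  have h_upper := hh.monotoneOn hv hu (right_mem_Icc.2 zero_le_one) hu.2
  rw [hh.apply_zero hv] at h_lower
  rw [hh.apply_one hv] at h_upper
  exact ⟨h_lower, h_upper⟩

lemma one_apply (hh : IsDerivFamily C h) {u : ℝ} (hu : u ∈ Icc (0 : ℝ) 1) : C 1 u = u := by
  have one_mem : (1 : ℝ) ∈ Icc (0 : ℝ) 1 := right_mem_Icc.2 zero_le_one
  have h_lower := hh.monotoneOn_id_sub one_mem (left_mem_Icc.2 zero_le_one) hu hu.1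
  have h_upper := hh.monotoneOn_id_sub one_mem hu one_mem hu.2
  simp only [Pi.sub_apply, id, hh.apply_zero one_mem, hh.apply_one one_mem] at h_lower h_upper
  linarith

lemma isCopula (hh : IsDerivFamily C h) : IsCopula C := by
  have zero_mem : (0 : ℝ) ∈ Icc (0 : ℝ) 1 := left_mem_Icc.2 zero_le_one
  refine ⟨fun v hv u hu => Icc_subset_Icc_right hv.2 (hh.apply_mem_Icc hv hu),
    fun v hv => hh.apply_zero hv,
    fun u hu => mem_singleton_iff.1 (Icc_self (0 : ℝ) ▸ hh.apply_mem_Icc zero_mem hu),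
    fun v hv => hh.apply_one hv, fun u hu => hh.one_apply hu, ?two_increasing⟩
  case two_increasing =>
    intro v w a b hv hvw hw ha hab hb
    have h_incr := hh.monotoneOn_sub ⟨hv, hvw.trans hw⟩ ⟨hv.trans hvw, hw⟩ hvw
      ⟨ha, hab.trans hb⟩ ⟨ha.trans hab, hb⟩ hab
    simp only [Pi.sub_apply] at h_incr
    linarith

end IsDerivFamily

/-- A function `C : [0,1]² → [0,1]` is a bivariate copula if and
only if it admits a derivative family `(h_v)_{v∈[0,1]}` of measurable functions
`h_v : [0,1] → [0,1]` with `C(v,u) = ∫₀ᵘ h_v(t) dt`, `v ↦ h_v(t)` increasing, and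
`∫₀¹ h_v(t) dt = v`. -/
theorem copula_iff_exists_derivFamily (C : ℝ → ℝ → ℝ) :
    IsCopula C ↔ ∃ h : ℝ → ℝ → ℝ, IsDerivFamily C h :=
  ⟨fun hC => ⟨_, hC.isDerivFamily_seqUpperDeriv⟩, fun ⟨_, hh⟩ => hh.isCopula⟩

end
end

section
/- Let C be a bivariate copula with derivative family (h_v)_{v∈[0,1]}, and define T(C)(v,u) := ∫₀¹ min(h_v(t), u) dt for (v,u) ∈ [0,1]². Then T(C) is a bivariate copula, and for every v ∈ [0,1] the map u ↦ T(C)(v,u) is concave on [0,1]; that is, T(C) is a stochastically increasing copula. -/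
open MeasureTheory Set

noncomputable section

/-! Pointwise, `(a, u) ↦ min a u` is supermodular, and concave in `u`; both properties survive
integration, and supermodularity turns the monotonicity of `v ↦ h_v` into the 2-increasing property.
For the boundary values, `min (h_v) u` integrates to `∫ h_v` where `h_v ≤ u` almost everywhere and
to `u` where `u ≤ h_v` almost everywhere. The edges `v = 0` and `v = 1` are of this kind, since a
`[0,1]`-valued function with mean `0` or `1` is almost everywhere constant. -/

theorem min_add_min_le_min_add_min_of_le {α : Type*} [AddCommMonoid α] [LinearOrder α]
    [IsOrderedAddMonoid α] {a b c d : α} (hab : a ≤ b) (hcd : c ≤ d) :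
    min a d + min b c ≤ min b d + min a c := by
  rcases le_total a c with hac | hca
  · calc min a d + min b c ≤ a + min b d :=
          add_le_add (min_le_left a d) (min_le_min_left b hcd)
      _ = min b d + min a c := by rw [min_eq_left hac, add_comm]
  · calc min a d + min b c = min a d + c := by rw [min_eq_right (hca.trans hab)]
      _ ≤ min b d + c := by gcongr
      _ = min b d + min a c := by rw [min_eq_right hca]

section MeasureSpace

variable {Ω : Type*} [MeasurableSpace Ω] {μ : Measure Ω}

section IntegralMin

variable {f g : Ω → ℝ} {u u₁ u₂ : ℝ}

theorem integrable_min_const [IsFiniteMeasure μ] (hf : Integrable f μ) (u : ℝ) :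
    Integrable (fun t => min (f t) u) μ :=
  hf.inf (integrable_const u)

theorem concaveOn_integral_min [IsFiniteMeasure μ] (hf : Integrable f μ) :
    ConcaveOn ℝ univ fun u => ∫ t, min (f t) u ∂μ :=
  integral_concaveOn_of_integrand_ae convex_univ
    (.of_forall fun t => (concaveOn_const (f t) convex_univ).inf (concaveOn_id convex_univ))
    fun u _ => integrable_min_const hf u

theorem integral_min_add_integral_min_le_of_ae_le [IsFiniteMeasure μ] (hf : Integrable f μ)
    (hg : Integrable g μ) (hfg : f ≤ᵐ[μ] g) (hu : u₁ ≤ u₂) :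
    ∫ t, min (f t) u₂ ∂μ + ∫ t, min (g t) u₁ ∂μ ≤
      ∫ t, min (g t) u₂ ∂μ + ∫ t, min (f t) u₁ ∂μ := by
  have hfu := integrable_min_const hf
  have hgu := integrable_min_const hg
  rw [← integral_add (hfu u₂) (hgu u₁), ← integral_add (hgu u₂) (hfu u₁)]
  refine integral_mono_ae ((hfu u₂).add (hgu u₁)) ((hgu u₂).add (hfu u₁)) ?_
  filter_upwards [hfg] with t ht using min_add_min_le_min_add_min_of_le ht hu

theorem integral_min_eq_integral_of_ae_le (hfu : ∀ᵐ t ∂μ, f t ≤ u) :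
    ∫ t, min (f t) u ∂μ = ∫ t, f t ∂μ :=
  integral_congr_ae (hfu.mono fun _ ht => min_eq_left ht)

theorem integral_min_eq_const_of_ae_ge [IsProbabilityMeasure μ] (huf : ∀ᵐ t ∂μ, u ≤ f t) :
    ∫ t, min (f t) u ∂μ = u := by
  simpa using integral_congr_ae (huf.mono fun _ ht => min_eq_right ht)

end IntegralMin

/-- Derivative families over an arbitrary measure space `(Ω, μ)` in place of `[0,1]` with Lebesgue
measure. The copula is not part of the data, and pointwise conditions are only required almost
everywhere. -/
structure IsDerivFamilyOver (μ : Measure Ω) (h : ℝ → Ω → ℝ) : Prop where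
  aemeasurable : ∀ v ∈ Icc (0 : ℝ) 1, AEMeasurable (h v) μ
  ae_mem_Icc : ∀ v ∈ Icc (0 : ℝ) 1, ∀ᵐ t ∂μ, h v t ∈ Icc (0 : ℝ) 1
  ae_mono : ∀ v₁ ∈ Icc (0 : ℝ) 1, ∀ v₂ ∈ Icc (0 : ℝ) 1, v₁ ≤ v₂ → h v₁ ≤ᵐ[μ] h v₂
  integral_eq : ∀ v ∈ Icc (0 : ℝ) 1, ∫ t, h v t ∂μ = v

/-- The upper product transform `T(v,u) = ∫ min(h_v, u) dμ` of a family `h` over `(Ω, μ)`. -/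
def upperProductTransform (μ : Measure Ω) (h : ℝ → Ω → ℝ) (v u : ℝ) : ℝ :=
  ∫ t, min (h v t) u ∂μ

namespace IsDerivFamilyOver

variable {h : ℝ → Ω → ℝ} {u v : ℝ}

theorem integrable [IsFiniteMeasure μ] (hh : IsDerivFamilyOver μ h) (hv : v ∈ Icc (0 : ℝ) 1) :
    Integrable (h v) μ :=
  .of_mem_Icc 0 1 (hh.aemeasurable v hv) (hh.ae_mem_Icc v hv)

theorem ae_eq_zero [IsFiniteMeasure μ] (hh : IsDerivFamilyOver μ h) : h 0 =ᵐ[μ] 0 :=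
  have h0 : (0 : ℝ) ∈ Icc (0 : ℝ) 1 := unitInterval.zero_mem
  (integral_eq_zero_iff_of_nonneg_ae ((hh.ae_mem_Icc 0 h0).mono fun _ ht => ht.1)
    (hh.integrable h0)).1 (hh.integral_eq 0 h0)

theorem ae_eq_one [IsProbabilityMeasure μ] (hh : IsDerivFamilyOver μ h) : h 1 =ᵐ[μ] 1 :=
  have h1 : (1 : ℝ) ∈ Icc (0 : ℝ) 1 := unitInterval.one_mem
  (integral_eq_iff_of_ae_le (hh.integrable h1) (integrable_const 1)
    ((hh.ae_mem_Icc 1 h1).mono fun _ ht => ht.2)).1 (by simp [hh.integral_eq 1 h1])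

theorem upperProductTransform_one_right (hh : IsDerivFamilyOver μ h) (hv : v ∈ Icc (0 : ℝ) 1) :
    upperProductTransform μ h v 1 = v :=
  (integral_min_eq_integral_of_ae_le ((hh.ae_mem_Icc v hv).mono fun _ ht => ht.2)).trans
    (hh.integral_eq v hv)

theorem upperProductTransform_zero_left [IsFiniteMeasure μ] (hh : IsDerivFamilyOver μ h)
    (hu : 0 ≤ u) : upperProductTransform μ h 0 u = 0 :=
  (integral_min_eq_integral_of_ae_le (hh.ae_eq_zero.mono fun _ ht => ht.trans_le hu)).trans
    (hh.integral_eq 0 unitInterval.zero_mem)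

variable [IsProbabilityMeasure μ]

theorem upperProductTransform_mem_Icc (hh : IsDerivFamilyOver μ h) (hv : v ∈ Icc (0 : ℝ) 1)
    (hu : u ∈ Icc (0 : ℝ) 1) : upperProductTransform μ h v u ∈ Icc (0 : ℝ) 1 :=
  (convex_Icc 0 1).integral_mem isClosed_Icc
    ((hh.ae_mem_Icc v hv).mono fun _ ht => ⟨le_min ht.1 hu.1, min_le_of_left_le ht.2⟩)
    (integrable_min_const (hh.integrable hv) u)

theorem upperProductTransform_zero_right (hh : IsDerivFamilyOver μ h) (hv : v ∈ Icc (0 : ℝ) 1) :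
    upperProductTransform μ h v 0 = 0 :=
  integral_min_eq_const_of_ae_ge ((hh.ae_mem_Icc v hv).mono fun _ ht => ht.1)

theorem upperProductTransform_one_left (hh : IsDerivFamilyOver μ h) (hu : u ≤ 1) :
    upperProductTransform μ h 1 u = u :=
  integral_min_eq_const_of_ae_ge (hh.ae_eq_one.mono fun _ ht => hu.trans_eq ht.symm)

theorem isCopula_upperProductTransform (hh : IsDerivFamilyOver μ h) :
    IsCopula (upperProductTransform μ h) := by
  refine ⟨fun v hv u hu => hh.upperProductTransform_mem_Icc hv hu,
    fun v hv => hh.upperProductTransform_zero_right hv,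
    fun u hu => hh.upperProductTransform_zero_left hu.1,
    fun v hv => hh.upperProductTransform_one_right hv,
    fun u hu => hh.upperProductTransform_one_left hu.2,
    fun v₁ v₂ u₁ u₂ hv₁ hv hv₂ _ hu _ => ?_⟩
  have hv₁_mem : v₁ ∈ Icc (0 : ℝ) 1 := ⟨hv₁, hv.trans hv₂⟩
  have hv₂_mem : v₂ ∈ Icc (0 : ℝ) 1 := ⟨hv₁.trans hv, hv₂⟩
  have supermodular : upperProductTransform μ h v₁ u₂ + upperProductTransform μ h v₂ u₁ ≤
      upperProductTransform μ h v₂ u₂ + upperProductTransform μ h v₁ u₁ :=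
    integral_min_add_integral_min_le_of_ae_le (hh.integrable hv₁_mem) (hh.integrable hv₂_mem)
      (hh.ae_mono v₁ hv₁_mem v₂ hv₂_mem hv) hu
  linarith

end IsDerivFamilyOver

theorem upperProductTransform_isCopula_SI_general [IsProbabilityMeasure μ] {h : ℝ → Ω → ℝ}
    (hh : IsDerivFamilyOver μ h) :
    IsCopula (upperProductTransform μ h) ∧
    ∀ v ∈ Icc (0 : ℝ) 1, ConcaveOn ℝ (Icc (0 : ℝ) 1) (upperProductTransform μ h v) :=
  ⟨hh.isCopula_upperProductTransform, fun _ hv =>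
    (concaveOn_integral_min (hh.integrable hv)).subset (subset_univ _) (convex_Icc 0 1)⟩

end MeasureSpace

theorem IsDerivFamily.isDerivFamilyOver {C h : ℝ → ℝ → ℝ} (hh : IsDerivFamily C h) :
    IsDerivFamilyOver (volume.restrict (Ioc (0 : ℝ) 1)) h := by
  obtain ⟨hmeas, hmem, -, hmono, hint⟩ := hh
  have ae_Icc : ∀ᵐ t ∂volume.restrict (Ioc (0 : ℝ) 1), t ∈ Icc (0 : ℝ) 1 :=
    (ae_restrict_mem measurableSet_Ioc).mono fun _ ht => Ioc_subset_Icc_self ht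
  exact
    { aemeasurable := fun v hv => (hmeas v hv).aemeasurable
      ae_mem_Icc := fun v hv => ae_Icc.mono (hmem v hv)
      ae_mono := fun v₁ hv₁ v₂ hv₂ hv => ae_Icc.mono fun t ht => hmono t ht hv₁ hv₂ hv
      integral_eq := fun v hv =>
        (intervalIntegral.integral_of_le zero_le_one).symm.trans (hint v hv) }

/-- For a copula `C` with derivative family `(h_v)`, the upper
product transform `T(C)(v,u) = ∫₀¹ min(h_v(t), u) dt` is a bivariate copula which
is stochastically increasing, i.e. `u ↦ T(C)(v,u)` is concave on `[0,1]` for every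
`v ∈ [0,1]`. -/
theorem upperProductTransform_isCopula_SI (C h : ℝ → ℝ → ℝ)
    (hC : IsCopula C) (hh : IsDerivFamily C h) :
    IsCopula (fun v u => ∫ t in (0:ℝ)..1, min (h v t) u) ∧
    ∀ v ∈ Icc (0:ℝ) 1,
      ConcaveOn ℝ (Icc (0:ℝ) 1) (fun u => ∫ t in (0:ℝ)..1, min (h v t) u) := by
  have : IsProbabilityMeasure (volume.restrict (Ioc (0 : ℝ) 1)) := ⟨by simp⟩
  simp only [intervalIntegral.integral_of_le zero_le_one]
  exact upperProductTransform_isCopula_SI_general hh.isDerivFamilyOver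

end
end

section
/- Let h : [0,1] → [0,1] be Lebesgue-measurable and define g(u) := ∫₀¹ min(h(t), u) dt for u ∈ [0,1]. Then for every u ∈ [0,1), the right derivative of g at u exists and equals λ({t ∈ [0,1] : h(t) > u}); that is, lim_{ε→0⁺} (g(u+ε) − g(u))/ε = λ({t ∈ [0,1] : h(t) > u}), where λ is Lebesgue measure on [0,1]. -/
open MeasureTheory Set Filter

noncomputable section

/-!
For fixed `a`, the function `c ↦ min a c` has right derivative `1` at `u` if `u < a` and `0`
otherwise. On `c > u` its difference quotients at `u` lie between `0` and this same indicator, so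
the indicator of `{h > u}` is both the pointwise limit and an integrable dominating function of the
difference quotients of `min (h t)`, and dominated convergence applies.
-/

lemma abs_min_sub_min_le_indicator {α : Type*} [AddCommGroup α] [LinearOrder α]
    [IsOrderedAddMonoid α] (a : α) {u c : α} (huc : u ≤ c) :
    |min a c - min a u| ≤ (Ioi u).indicator (fun _ => c - u) a := by
  by_cases ha : u < a
  · rw [indicator_of_mem (mem_Ioi.2 ha)]
    simpa [abs_of_nonneg (sub_nonneg.2 huc), huc] using abs_min_sub_min_le_max a c a u
  · have hau : a ≤ u := not_lt.1 ha
    simp [ha, min_eq_left hau, min_eq_left (hau.trans huc)]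

lemma abs_slope_min_le_indicator (a : ℝ) {u c : ℝ} (huc : u < c) :
    |slope (min a) u c| ≤ (Ioi u).indicator (fun _ => 1) a := by
  have hpos : 0 < c - u := sub_pos.2 huc
  rw [slope_def_field, abs_div, abs_of_pos hpos, div_le_iff₀ hpos]
  refine (abs_min_sub_min_le_indicator a huc.le).trans_eq ?_
  rw [← indicator_mul_const, one_mul]

lemma hasDerivWithinAt_min_Ioi (a u : ℝ) :
    HasDerivWithinAt (min a) ((Ioi u).indicator (fun _ => 1) a) (Ioi u) u := by
  by_cases ha : u < a
  · rw [indicator_of_mem (mem_Ioi.2 ha)]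
    have h_id : min a =ᶠ[nhds u] id := by
      filter_upwards [Iio_mem_nhds ha] with c hc using min_eq_right (mem_Iio.1 hc).le
    exact ((hasDerivAt_id u).congr_of_eventuallyEq h_id).hasDerivWithinAt
  · have hau : a ≤ u := not_lt.1 ha
    rw [indicator_of_notMem (notMem_Ioi.2 hau)]
    exact (hasDerivWithinAt_const u (Ioi u) a).congr
      (fun c hc => min_eq_left (hau.trans (mem_Ioi.1 hc).le)) (min_eq_left hau)

lemma hasDerivWithinAt_Ioi_iff_tendsto_slope_zero {E : Type*} [NormedAddCommGroup E]
    [NormedSpace ℝ E] {f : ℝ → E} {f' : E} {x : ℝ} :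
    HasDerivWithinAt f f' (Ioi x) x ↔
      Tendsto (fun ε : ℝ => ε⁻¹ • (f (x + ε) - f x)) (nhdsWithin 0 (Ioi 0)) (nhds f') := by
  have h_map : nhdsWithin x (Ioi x) = map (x + ·) (nhdsWithin 0 (Ioi 0)) := by simp
  rw [hasDerivWithinAt_iff_tendsto_slope' self_notMem_Ioi, h_map, tendsto_map'_iff]
  simp [slope, Function.comp_def]

section IntegralMin

variable {Ω : Type*} [MeasurableSpace Ω] {μ : Measure Ω} {h : Ω → ℝ} {u : ℝ}

lemma integrable_indicator_Ioi_comp (hh : AEMeasurable h μ) (hfin : μ {t | u < h t} ≠ ⊤) (b : ℝ) :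
    Integrable (fun t => (Ioi u).indicator (fun _ => b) (h t)) μ :=
  (integrableOn_const hfin).integrable_indicator₀ (nullMeasurableSet_lt aemeasurable_const hh)

lemma integral_indicator_Ioi_comp (hh : AEMeasurable h μ) :
    ∫ t, (Ioi u).indicator (fun _ => (1 : ℝ)) (h t) ∂μ = μ.real {t | u < h t} :=
  calc ∫ t, (Ioi u).indicator (fun _ => (1 : ℝ)) (h t) ∂μ
      = ∫ _ in {t | u < h t}, (1 : ℝ) ∂μ :=
        integral_indicator₀ (nullMeasurableSet_lt aemeasurable_const hh)
    _ = μ.real {t | u < h t} := by simp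

lemma integrable_min_of_le (hh : AEMeasurable h μ) (hint : Integrable (fun t => min (h t) u) μ)
    (hfin : μ {t | u < h t} ≠ ⊤) {c : ℝ} (huc : u ≤ c) :
    Integrable (fun t => min (h t) c) μ := by
  have h_incr : Integrable (fun t => min (h t) c - min (h t) u) μ :=
    (integrable_indicator_Ioi_comp hh hfin (c - u)).mono'
      ((hh.min aemeasurable_const).sub (hh.min aemeasurable_const)).aestronglyMeasurable
      (.of_forall fun t => abs_min_sub_min_le_indicator (h t) huc)
  exact (h_incr.add hint).congr (.of_forall fun t => sub_add_cancel _ _)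

lemma integrable_min_of_mem_Icc [IsFiniteMeasure μ] {a b : ℝ} (hh : AEMeasurable h μ)
    (hmem : ∀ᵐ t ∂μ, h t ∈ Icc a b) (c : ℝ) : Integrable (fun t => min (h t) c) μ :=
  .of_mem_Icc (min a c) b (hh.min aemeasurable_const) <| hmem.mono fun _ ht =>
    ⟨min_le_min_right c ht.1, min_le_of_left_le ht.2⟩

theorem rightDeriv_upperProduct_general (hh : AEMeasurable h μ)
    (hint : Integrable (fun t => min (h t) u) μ) (hfin : μ {t | u < h t} ≠ ⊤) :
    HasDerivWithinAt (fun c => ∫ t, min (h t) c ∂μ) (μ.real {t | u < h t}) (Ioi u) u := by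
  have h_int : ∀ c ∈ Ioi u, Integrable (fun t => min (h t) c) μ := fun c hc =>
    integrable_min_of_le hh hint hfin (mem_Ioi.1 hc).le
  have h_slope : ∀ c ∈ Ioi u,
      ∫ t, slope (min (h t)) u c ∂μ = slope (fun c => ∫ t, min (h t) c ∂μ) u c := fun c hc => by
    simp only [slope_def_field, integral_div, integral_sub (h_int c hc) hint]
  rw [hasDerivWithinAt_iff_tendsto_slope' self_notMem_Ioi, ← integral_indicator_Ioi_comp hh]
  refine Tendsto.congr' (eventually_nhdsWithin_of_forall h_slope) ?_
  refine tendsto_integral_filter_of_dominated_convergence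
    (fun t => (Ioi u).indicator (fun _ => 1) (h t)) ?_ ?_
    (integrable_indicator_Ioi_comp hh hfin 1) ?_
  · filter_upwards [self_mem_nhdsWithin] with c hc
    simp only [slope_def_field]
    exact (((h_int c hc).sub hint).div_const (c - u)).aestronglyMeasurable
  · filter_upwards [self_mem_nhdsWithin] with c hc
    exact .of_forall fun t => abs_slope_min_le_indicator (h t) hc
  · exact .of_forall fun t =>
      (hasDerivWithinAt_iff_tendsto_slope' self_notMem_Ioi).1 (hasDerivWithinAt_min_Ioi (h t) u)

end IntegralMin

/-- Let `h : [0,1] → [0,1]` be Lebesgue measurable and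
`g(u) = ∫₀¹ min(h(t), u) dt`. Then for every `u ∈ [0,1)` the right derivative of
`g` at `u` exists and equals `λ({t ∈ [0,1] : h(t) > u})`. -/
theorem rightDeriv_upperProduct (h : ℝ → ℝ)
    (hmeas : Measurable h)
    (hrange : ∀ t ∈ Icc (0:ℝ) 1, h t ∈ Icc (0:ℝ) 1) :
    ∀ u ∈ Ico (0:ℝ) 1,
      Tendsto
        (fun ε : ℝ =>
          ((∫ t in (0:ℝ)..1, min (h t) (u + ε)) - ∫ t in (0:ℝ)..1, min (h t) u) / ε)
        (nhdsWithin 0 (Ioi 0))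
        (nhds ((volume {t ∈ Icc (0:ℝ) 1 | u < h t}).toReal)) := by
  intro u _
  have hint : IntegrableOn (fun t => min (h t) u) (Icc 0 1) :=
    integrable_min_of_mem_Icc hmeas.aemeasurable
      ((ae_restrict_mem measurableSet_Icc).mono hrange) u
  have hvol : (volume.restrict (Icc (0 : ℝ) 1)).real {t | u < h t} =
      (volume {t ∈ Icc (0 : ℝ) 1 | u < h t}).toReal := by
    rw [measureReal_restrict_apply' measurableSet_Icc, inter_comm]
    rfl
  have hderiv := hasDerivWithinAt_Ioi_iff_tendsto_slope_zero.1 <|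
    rightDeriv_upperProduct_general hmeas.aemeasurable hint (measure_ne_top _ _)
  simpa only [hvol, intervalIntegral.integral_of_le zero_le_one, ← integral_Icc_eq_integral_Ioc,
    smul_eq_mul, ← div_eq_inv_mul] using hderiv

end
end

section
/- Let h : [0,1] → [0,1] be Lebesgue-measurable and let f : [0,1] → [0,1] be decreasing, right-continuous, and equimeasurable with h, i.e. λ({t : f(t) ≤ y}) = λ({t : h(t) ≤ y}) for every y ∈ [0,1]. Then for every u ∈ [0,1], ∫₀ᵘ f⁻¹(s) ds = ∫₀¹ min(h(t), u) dt, where f⁻¹(s) := inf{t ∈ [0,1] : f(t) ≤ s} (inf ∅ = 1). -/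
/-!
For decreasing `f`, the set `{t ∈ [0,1] | f t ≤ s}` is, up to endpoints, the interval
`[f⁻¹(s), 1]`, so `f⁻¹(s)` is the measure of `{f > s}`, which by equimeasurability is the measure of
`{h > s}`. Integrating over `s ∈ [0, u]` gives `∫ min(h, u)` by the layer cake formula.
-/

open MeasureTheory Set

noncomputable section

/-- Generalized inverse of a decreasing function `f : [0,1] → [0,1]`:
`f⁻¹(w) = inf {t ∈ [0,1] | f t ≤ w}`, with the convention `inf ∅ = 1`. -/
def geninv (f : ℝ → ℝ) (w : ℝ) : ℝ :=
  sInf (insert (1:ℝ) {t ∈ Icc (0:ℝ) 1 | f t ≤ w})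

section GenInv

variable (f : ℝ → ℝ) (w : ℝ)

theorem isGLB_geninv :
    IsGLB (insert (1 : ℝ) {t ∈ Icc (0 : ℝ) 1 | f t ≤ w}) (geninv f w) :=
  isGLB_csInf (insert_nonempty _ _)
    (BddBelow.insert 1 (bddBelow_Icc.mono (sep_subset (Icc 0 1) fun t => f t ≤ w)))

theorem geninv_le_one : geninv f w ≤ 1 :=
  (isGLB_geninv f w).1 (mem_insert _ _)

variable {f w}

theorem sublevel_subset_Icc_geninv :
    {t ∈ Icc (0 : ℝ) 1 | f t ≤ w} ⊆ Icc (geninv f w) 1 :=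
  fun _ ht => ⟨(isGLB_geninv f w).1 (mem_insert_of_mem _ ht), ht.1.2⟩

theorem Ioo_geninv_subset_sublevel (hf : AntitoneOn f (Icc (0 : ℝ) 1)) :
    Ioo (geninv f w) 1 ⊆ {t ∈ Icc (0 : ℝ) 1 | f t ≤ w} := by
  rintro t ⟨hwt, ht1⟩
  obtain ⟨r, rfl | ⟨hr, hfr⟩, hrt⟩ := (isGLB_lt_iff (isGLB_geninv f w)).1 hwt
  · exact absurd ht1 hrt.not_gt
  · have ht : t ∈ Icc (0 : ℝ) 1 := ⟨hr.1.trans hrt.le, ht1.le⟩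
    exact ⟨ht, (hf hr ht hrt.le).trans hfr⟩

theorem volume_sublevel_eq_ofReal_one_sub_geninv (hf : AntitoneOn f (Icc (0 : ℝ) 1)) :
    volume {t ∈ Icc (0 : ℝ) 1 | f t ≤ w} = ENNReal.ofReal (1 - geninv f w) :=
  le_antisymm ((measure_mono sublevel_subset_Icc_geninv).trans_eq Real.volume_Icc)
    (Real.volume_Ioo.symm.trans_le (measure_mono (Ioo_geninv_subset_sublevel hf)))

end GenInv

theorem measureReal_restrict_superlevel {α β : Type*} [MeasurableSpace α] [LinearOrder β]
    [TopologicalSpace β] [ClosedIicTopology β] [MeasurableSpace β] [OpensMeasurableSpace β]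
    {μ : Measure α} {A : Set α} [IsFiniteMeasure (μ.restrict A)] (hA : MeasurableSet A)
    {g : α → β} (hg : AEMeasurable g (μ.restrict A)) (s : β) :
    (μ.restrict A).real {a | s < g a} = μ.real A - μ.real {a ∈ A | g a ≤ s} := by
  have hcompl : {a | s < g a} = (g ⁻¹' Iic s)ᶜ := by
    ext a
    exact not_le.symm
  rw [hcompl, measureReal_compl₀ (hg.nullMeasurable measurableSet_Iic),
    measureReal_restrict_apply_univ, measureReal_restrict_apply' hA, inter_comm]
  rfl

theorem geninv_eq_measureReal_superlevel_of_equimeasurable {h f : ℝ → ℝ} {s : ℝ}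
    (hmeas : AEMeasurable h (volume.restrict (Icc (0 : ℝ) 1)))
    (fdec : AntitoneOn f (Icc (0 : ℝ) 1))
    (fequi : volume {t ∈ Icc (0 : ℝ) 1 | f t ≤ s} = volume {t ∈ Icc (0 : ℝ) 1 | h t ≤ s}) :
    geninv f s = (volume.restrict (Icc (0 : ℝ) 1)).real {t | s < h t} := by
  rw [measureReal_restrict_superlevel measurableSet_Icc hmeas,
    Real.volume_real_Icc_of_le zero_le_one, sub_zero, measureReal_def, ← fequi,
    volume_sublevel_eq_ofReal_one_sub_geninv fdec,
    ENNReal.toReal_ofReal (sub_nonneg.2 (geninv_le_one f s)), sub_sub_cancel]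

theorem integral_min_const_eq_integral_measureReal_lt {α : Type*} [MeasurableSpace α]
    {μ : Measure α} {g : α → ℝ} {u : ℝ} (hu : 0 ≤ u) (g_nonneg : 0 ≤ᵐ[μ] g)
    (hint : Integrable (fun a => min (g a) u) μ) :
    ∫ a, min (g a) u ∂μ = ∫ s in (0 : ℝ)..u, μ.real {a | s < g a} := by
  have min_nonneg : 0 ≤ᵐ[μ] fun a => min (g a) u := g_nonneg.mono fun _ ha => le_min ha hu
  have min_le : (fun a => min (g a) u) ≤ᵐ[μ] fun _ => u := ae_of_all _ fun _ => min_le_right _ _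
  rw [hint.integral_eq_integral_Ioc_meas_le min_nonneg min_le, intervalIntegral.integral_of_le hu]
  apply integral_congr_ae
  filter_upwards [ae_restrict_mem measurableSet_Ioc,
    meas_le_ae_eq_meas_lt μ (volume.restrict (Ioc 0 u)) g] with s hs hle_lt
  simp only [le_min_iff, hs.2, and_true, measureReal_def, hle_lt]

theorem integral_geninv_eq_integral_min_general {h f : ℝ → ℝ} {u : ℝ} (hu : 0 ≤ u)
    (hmeas : AEMeasurable h (volume.restrict (Icc (0 : ℝ) 1)))
    (h_nonneg : 0 ≤ᵐ[volume.restrict (Icc (0 : ℝ) 1)] h)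
    (fdec : AntitoneOn f (Icc (0 : ℝ) 1))
    (fequi : ∀ y ∈ Ioo 0 u,
      volume {t ∈ Icc (0 : ℝ) 1 | f t ≤ y} = volume {t ∈ Icc (0 : ℝ) 1 | h t ≤ y}) :
    (∫ s in (0 : ℝ)..u, geninv f s) = ∫ t in (0 : ℝ)..1, min (h t) u := by
  have hint : Integrable (fun t => min (h t) u) (volume.restrict (Icc (0 : ℝ) 1)) :=
    .of_mem_Icc 0 u (hmeas.min aemeasurable_const)
      (h_nonneg.mono fun _ ht => ⟨le_min ht hu, min_le_right _ _⟩)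
  calc ∫ s in (0 : ℝ)..u, geninv f s
      = ∫ s in (0 : ℝ)..u, (volume.restrict (Icc (0 : ℝ) 1)).real {t | s < h t} :=
        intervalIntegral.integral_congr_uIoo fun s hs =>
          geninv_eq_measureReal_superlevel_of_equimeasurable hmeas fdec
            (fequi s (uIoo_of_le hu ▸ hs))
    _ = ∫ t in Icc (0 : ℝ) 1, min (h t) u :=
        (integral_min_const_eq_integral_measureReal_lt hu h_nonneg hint).symm
    _ = ∫ t in (0 : ℝ)..1, min (h t) u := by
        rw [intervalIntegral.integral_of_le zero_le_one, restrict_Ioc_eq_restrict_Icc]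

/-- Let `h : [0,1] → [0,1]` be measurable and `f : [0,1] → [0,1]`
be decreasing, right-continuous and equimeasurable with `h`. Then
`∫₀ᵘ f⁻¹(s) ds = ∫₀¹ min(h(t), u) dt` for every `u ∈ [0,1]`. -/
theorem integral_geninv_eq_integral_min (h f : ℝ → ℝ)
    (hmeas : Measurable h)
    (hrange : ∀ t ∈ Icc (0:ℝ) 1, h t ∈ Icc (0:ℝ) 1)
    (frange : ∀ t ∈ Icc (0:ℝ) 1, f t ∈ Icc (0:ℝ) 1)
    (fdec : AntitoneOn f (Icc (0:ℝ) 1))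
    (frc : ∀ t ∈ Ico (0:ℝ) 1, ContinuousWithinAt f (Icc t 1) t)
    (fequi : ∀ y ∈ Icc (0:ℝ) 1,
      volume {t ∈ Icc (0:ℝ) 1 | f t ≤ y} = volume {t ∈ Icc (0:ℝ) 1 | h t ≤ y}) :
    ∀ u ∈ Icc (0:ℝ) 1,
      (∫ s in (0:ℝ)..u, geninv f s) = ∫ t in (0:ℝ)..1, min (h t) u :=
  fun _ hu => integral_geninv_eq_integral_min_general hu.1 hmeas.aemeasurable
    (ae_restrict_of_forall_mem measurableSet_Icc fun t ht => (hrange t ht).1) fdec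
    fun y hy => fequi y ⟨hy.1.le, hy.2.le.trans hu.2⟩

end
end

section
/- Let h : [0,1] → [0,1] be Lebesgue-measurable, let H(s) := λ({t ∈ [0,1] : h(t) > s}) for s ∈ [0,1], and let h* be any decreasing rearrangement of h. Then for every u ∈ [0,1], ∫₀¹ min(H(t), u) dt = ∫₀ᵘ h*(s) ds. Consequently, for any bivariate copula C with derivative family (h_v), applying the upper product transform twice yields the increasing rearranged copula: ∫₀¹ min(λ({s : h_v(s) > t}), u) dt = C↑(v,u) for all (v,u) ∈ [0,1]², i.e. T²(C) = C↑. -/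
open MeasureTheory Set

noncomputable section

/-- `hstar` is a decreasing rearrangement of `h` on `[0,1]`: it is decreasing,
maps `[0,1]` into `[0,1]`, and is equimeasurable with `h`. -/
def IsDecRearr (h hstar : ℝ → ℝ) : Prop :=
  AntitoneOn hstar (Icc (0:ℝ) 1) ∧
  (∀ t ∈ Icc (0:ℝ) 1, hstar t ∈ Icc (0:ℝ) 1) ∧
  ∀ y ∈ Icc (0:ℝ) 1,
    volume {t ∈ Icc (0:ℝ) 1 | hstar t ≤ y} = volume {t ∈ Icc (0:ℝ) 1 | h t ≤ y}

/-!
By equimeasurability and monotonicity, the superlevel set `{h* > t}` is an initial interval of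
`[0, 1]` of length `H(t)`. It is therefore nested with `[0, u]`, so that
`λ({h* > t} ∩ [0, u]) = min(H(t), u)`; the layer cake formula for `h*` on `[0, u]` integrates this
identity over `t`.
-/

section Superlevel

variable {α β : Type*}

theorem measureReal_inter_eq_min_of_subset_or_subset [MeasurableSpace α] {μ : Measure α}
    {s t : Set α} (hs : μ s ≠ ⊤) (ht : μ t ≠ ⊤) (hst : s ⊆ t ∨ t ⊆ s) :
    μ.real (s ∩ t) = min (μ.real s) (μ.real t) := by
  rcases hst with hst | hts
  · rw [inter_eq_left.2 hst, min_eq_left (measureReal_mono hst ht)]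
  · rw [inter_eq_right.2 hts, min_eq_right (measureReal_mono hts hs)]

theorem measure_superlevel_eq_of_measure_sublevel_eq [LinearOrder β] [MeasurableSpace α]
    {μ : Measure α} [IsFiniteMeasure μ] {f g : α → β} {y : β}
    (hf : NullMeasurableSet {x | f x ≤ y} μ) (hg : NullMeasurableSet {x | g x ≤ y} μ)
    (hfg : μ {x | f x ≤ y} = μ {x | g x ≤ y}) :
    μ {x | y < f x} = μ {x | y < g x} := by
  have hcompl (k : α → β) : {x | y < k x} = {x | k x ≤ y}ᶜ := by
    simp only [compl_ofPred, not_le]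
  rw [hcompl f, hcompl g, measure_compl₀ hf (measure_ne_top μ _),
    measure_compl₀ hg (measure_ne_top μ _), hfg]

variable [LinearOrder α] {s : Set α} {u : α}

theorem superlevel_subset_or_subset_of_antitoneOn [Preorder β] {f : α → β}
    (hf : AntitoneOn f s) (hu : u ∈ s) (t : β) :
    {x ∈ s | t < f x} ⊆ s ∩ Iic u ∨ s ∩ Iic u ⊆ {x ∈ s | t < f x} := by
  by_cases ht : t < f u
  · exact .inr fun x hx ↦ ⟨hx.1, ht.trans_le (hf hx.1 hu hx.2)⟩
  · refine .inl fun x hx ↦ ⟨hx.1, le_of_not_gt fun hux ↦ ht ?_⟩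
    exact hx.2.trans_le (hf hu hx.1 hux.le)

theorem setIntegral_inter_Iic_eq_integral_min_superlevel [MeasurableSpace α] {μ : Measure α}
    {f : α → ℝ} (hs : MeasurableSet (s ∩ Iic u)) (hμs : μ s ≠ ⊤) (hf : AntitoneOn f s)
    (hint : IntegrableOn f (s ∩ Iic u) μ) (hu : u ∈ s) (hfu : 0 ≤ f u) :
    ∫ x in s ∩ Iic u, f x ∂μ =
      ∫ t in Ioi 0, min (μ.real {x ∈ s | t < f x}) (μ.real (s ∩ Iic u)) := by
  have hnonneg : 0 ≤ᵐ[μ.restrict (s ∩ Iic u)] f :=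
    ae_restrict_of_forall_mem hs fun x hx ↦ hfu.trans (hf hx.1 hu hx.2)
  have hinter (t : ℝ) :
      {x | t < f x} ∩ (s ∩ Iic u) = {x ∈ s | t < f x} ∩ (s ∩ Iic u) := by
    rw [← ofPred_inter_eq_sep, inter_assoc, ← inter_assoc s s, inter_self]
  have hmin (t : ℝ) : (μ.restrict (s ∩ Iic u)).real {x | t < f x} =
      min (μ.real {x ∈ s | t < f x}) (μ.real (s ∩ Iic u)) := by
    rw [measureReal_restrict_apply' hs, hinter]
    exact measureReal_inter_eq_min_of_subset_or_subset
      (measure_ne_top_of_subset (sep_subset _ _) hμs)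
      (measure_ne_top_of_subset inter_subset_left hμs)
      (superlevel_subset_or_subset_of_antitoneOn hf hu t)
  simp only [hint.integral_eq_integral_meas_lt hnonneg, hmin]

end Superlevel

theorem intervalIntegral_eq_integral_min_superlevel_of_antitoneOn {f : ℝ → ℝ} {a b u M : ℝ}
    (hf : AntitoneOn f (Icc a b)) (hu : u ∈ Icc a b) (hfu : 0 ≤ f u) (hfa : f a ≤ M) :
    ∫ s in a..u, f s =
      ∫ t in (0 : ℝ)..M, min (volume.real {s ∈ Icc a b | t < f s}) (u - a) := by
  have ha : a ∈ Icc a b := left_mem_Icc.2 (hu.1.trans hu.2)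
  have hM : 0 ≤ M := hfu.trans ((hf ha hu hu.1).trans hfa)
  have hIcc : Icc a b ∩ Iic u = Icc a u := by
    rw [← Ici_inter_Iic, inter_assoc, Iic_inter_Iic, inf_eq_right.2 hu.2, Ici_inter_Iic]
  have hint : IntegrableOn f (Icc a b ∩ Iic u) :=
    (hf.integrableOn_isCompact isCompact_Icc).mono_set inter_subset_left
  have hvanish (t : ℝ) (ht : t ∈ Ioi 0 \ Ioc 0 M) :
      min (volume.real {s ∈ Icc a b | t < f s}) (u - a) = 0 := by
    have hMt : M < t := not_le.1 fun htM ↦ ht.2 ⟨ht.1, htM⟩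
    have hempty : {s ∈ Icc a b | t < f s} = ∅ :=
      sep_eq_empty_iff_mem_false.2 fun s hs ↦ ((hf ha hs hs.1).trans (hfa.trans hMt.le)).not_gt
    rw [hempty, measureReal_empty, min_eq_left (sub_nonneg.2 hu.1)]
  calc ∫ s in a..u, f s
    _ = ∫ s in Icc a b ∩ Iic u, f s := by
      rw [intervalIntegral.integral_of_le hu.1, hIcc, integral_Icc_eq_integral_Ioc]
    _ = ∫ t in Ioi 0, min (volume.real {s ∈ Icc a b | t < f s}) (u - a) := by
      rw [setIntegral_inter_Iic_eq_integral_min_superlevel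
        (measurableSet_Icc.inter measurableSet_Iic) isCompact_Icc.measure_ne_top hf hint hu hfu,
        hIcc, Real.volume_real_Icc_of_le hu.1]
    _ = ∫ t in (0 : ℝ)..M, min (volume.real {s ∈ Icc a b | t < f s}) (u - a) := by
      rw [intervalIntegral.integral_of_le hM]
      exact setIntegral_eq_of_subset_of_forall_sdiff_eq_zero measurableSet_Ioi
        Ioc_subset_Ioi_self hvanish

theorem IsDecRearr.volume_superlevel_eq {h hstar : ℝ → ℝ} {y : ℝ} (hst : IsDecRearr h hstar)
    (hmeas : AEMeasurable h (volume.restrict (Icc 0 1))) (hy : y ∈ Icc (0 : ℝ) 1) :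
    volume {s ∈ Icc (0 : ℝ) 1 | y < hstar s} = volume {s ∈ Icc (0 : ℝ) 1 | y < h s} := by
  obtain ⟨hanti, -, hequi⟩ := hst
  have hrestrict (p : ℝ → Prop) :
      volume {s ∈ Icc (0 : ℝ) 1 | p s} = volume.restrict (Icc 0 1) {s | p s} := by
    rw [Measure.restrict_apply' measurableSet_Icc, ofPred_inter_eq_sep]
  have hmeas_star : AEMeasurable hstar (volume.restrict (Icc 0 1)) :=
    aemeasurable_restrict_of_antitoneOn measurableSet_Icc hanti
  simp only [hrestrict] at hequi ⊢
  exact measure_superlevel_eq_of_measure_sublevel_eq (hmeas_star.nullMeasurable measurableSet_Iic)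
    (hmeas.nullMeasurable measurableSet_Iic) (hequi y hy)

theorem upperProductTransform_sq_eq_rearranged_general {h hstar : ℝ → ℝ} {u : ℝ}
    (hmeas : AEMeasurable h (volume.restrict (Icc 0 1))) (hst : IsDecRearr h hstar)
    (hu : u ∈ Icc (0 : ℝ) 1) :
    ∫ t in (0 : ℝ)..1, min (volume {s ∈ Icc (0 : ℝ) 1 | t < h s}).toReal u =
      ∫ s in (0 : ℝ)..u, hstar s := by
  have hlevel (t : ℝ) (ht : t ∈ uIcc 0 1) :
      volume {s ∈ Icc (0 : ℝ) 1 | t < hstar s} = volume {s ∈ Icc (0 : ℝ) 1 | t < h s} :=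
    hst.volume_superlevel_eq hmeas (by rwa [uIcc_of_le zero_le_one] at ht)
  obtain ⟨hanti, hrange, -⟩ := hst
  rw [intervalIntegral_eq_integral_min_superlevel_of_antitoneOn hanti hu (hrange u hu).1
    (hrange 0 unitInterval.zero_mem).2, sub_zero]
  refine intervalIntegral.integral_congr fun t ht ↦ ?_
  simp only [measureReal_def, hlevel t ht]

/-- Let `h : [0,1] → [0,1]` be measurable,
`H(s) = λ({t ∈ [0,1] : h(t) > s})`, and `h*` any decreasing rearrangement of `h`.
Then `∫₀¹ min(H(t), u) dt = ∫₀ᵘ h*(s) ds` for every `u ∈ [0,1]`.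
Consequently, for any copula `C` with derivative family `(h_v)` and decreasing
rearrangements `(h_v*)`, applying the upper product transform twice yields the
increasing rearranged copula:
`∫₀¹ min(λ({s : h_v(s) > t}), u) dt = C↑(v,u) = ∫₀ᵘ h_v*(s) ds`, i.e. `T²(C) = C↑`. -/
theorem upperProductTransform_sq_eq_rearranged (h hstar : ℝ → ℝ)
    (hmeas : Measurable h)
    (hrange : ∀ t ∈ Icc (0:ℝ) 1, h t ∈ Icc (0:ℝ) 1)
    (hst : IsDecRearr h hstar) :
    (∀ u ∈ Icc (0:ℝ) 1,
        (∫ t in (0:ℝ)..1, min ((volume {s ∈ Icc (0:ℝ) 1 | t < h s}).toReal) u)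
          = ∫ s in (0:ℝ)..u, hstar s) ∧
    (∀ C hf hfstar : ℝ → ℝ → ℝ, IsCopula C → IsDerivFamily C hf →
        (∀ v ∈ Icc (0:ℝ) 1, IsDecRearr (hf v) (hfstar v)) →
        ∀ v ∈ Icc (0:ℝ) 1, ∀ u ∈ Icc (0:ℝ) 1,
          (∫ t in (0:ℝ)..1, min ((volume {s ∈ Icc (0:ℝ) 1 | t < hf v s}).toReal) u)
            = ∫ s in (0:ℝ)..u, hfstar v s) := by
  refine ⟨fun u hu ↦ upperProductTransform_sq_eq_rearranged_general hmeas.aemeasurable hst hu, ?_⟩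
  exact fun C hf hfstar _ hD hs v hv u hu ↦
    upperProductTransform_sq_eq_rearranged_general (hD.1 v hv).aemeasurable (hs v hv) hu

end
end

section
/- Let h, g : [0,1] → [0,1] be Lebesgue-measurable with decreasing rearrangements h*, g*. Then ∫₀¹ |λ({t : h(t) > u}) − λ({t : g(t) > u})| du = ∫₀¹ |h*(t) − g*(t)| dt. (Applied fiberwise to derivative families of copulas D, E, this gives the isometry d₁(T(D), T(E)) = d₁(D↑, E↑) of the upper product transform in the metric d₁ induced by the L¹-norm of partial derivatives.) -/
open MeasureTheory Set

noncomputable section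

/-!
Decreasing functions have superlevel sets that are totally ordered by inclusion, so the difference
of the measures of `{h* > u}` and `{g* > u}` is, up to sign, the measure of their symmetric
difference. The region between the graphs of `h*` and `g*` therefore has horizontal slices of
measure `|λ{h* > u} - λ{g* > u}|` and vertical slices of length `|h*(t) - g*(t)|`, and Tonelli's
theorem equates the two integrals. Rearrangement preserves the measures of the superlevel sets.
-/

open scoped symmDiff

section LayerCake

variable {α β : Type*} [MeasurableSpace α] [MeasurableSpace β]

lemma lintegral_measure_slice_comm {μ : Measure α} {ν : Measure β} [SFinite μ] [SFinite ν]
    {s : Set (α × β)} (hs : NullMeasurableSet s (μ.prod ν)) :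
    ∫⁻ x, ν {y | (x, y) ∈ s} ∂μ = ∫⁻ y, μ {x | (x, y) ∈ s} ∂ν := by
  obtain ⟨t, -, ht, hts⟩ := hs.exists_measurable_superset_ae_eq
  have left_slices : ∀ᵐ x ∂μ, ν (Prod.mk x ⁻¹' t) = ν {y | (x, y) ∈ s} := by
    filter_upwards [Measure.ae_ae_of_ae_prod hts] with x hx using measure_congr hx
  have right_slices : ∀ᵐ y ∂ν, μ ((fun x ↦ (x, y)) ⁻¹' t) = μ {x | (x, y) ∈ s} := by
    have hts_swap := Measure.measurePreserving_swap.quasiMeasurePreserving.ae hts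
    filter_upwards [Measure.ae_ae_of_ae_prod hts_swap] with y hy using measure_congr hy
  rw [← lintegral_congr_ae left_slices, ← lintegral_congr_ae right_slices,
    ← Measure.prod_apply ht, ← Measure.prod_apply_symm ht]

lemma volume_Iio_symmDiff_Iio (x y : ℝ) : volume (Iio x ∆ Iio y) = ENNReal.ofReal |x - y| := by
  wlog hxy : x ≤ y generalizing x y
  · rw [symmDiff_comm, abs_sub_comm]
    exact this y x (le_of_not_ge hxy)
  have symmDiff_eq_Ico : Iio x ∆ Iio y = Ico x y := by
    rw [symmDiff_of_le (Iio_subset_Iio hxy), sdiff_eq, compl_Iio, inter_comm, Ici_inter_Iio]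
  rw [symmDiff_eq_Ico, Real.volume_Ico, abs_sub_comm, abs_of_nonneg (sub_nonneg.2 hxy)]

variable {μ : Measure α}

lemma lintegral_measure_superlevel_symmDiff [SFinite μ] {f g : α → ℝ} (hf : AEMeasurable f μ)
    (hg : AEMeasurable g μ) :
    ∫⁻ u, μ ({t | u < f t} ∆ {t | u < g t}) = ∫⁻ t, ENNReal.ofReal |f t - g t| ∂μ := by
  have null_measurable_subgraph {k : α → ℝ} (hk : AEMeasurable k μ) :
      NullMeasurableSet {p : ℝ × α | p.1 < k p.2} (volume.prod μ) :=
    nullMeasurableSet_lt measurable_fst.aemeasurable hk.comp_snd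
  calc ∫⁻ u, μ ({t | u < f t} ∆ {t | u < g t})
      = ∫⁻ t, volume (Iio (f t) ∆ Iio (g t)) ∂μ :=
        lintegral_measure_slice_comm
          ((null_measurable_subgraph hf).symmDiff (null_measurable_subgraph hg))
    _ = ∫⁻ t, ENNReal.ofReal |f t - g t| ∂μ := by simp only [volume_Iio_symmDiff_Iio]

lemma abs_measureReal_sub_eq_measureReal_symmDiff [IsFiniteMeasure μ] {s t : Set α}
    (hs : NullMeasurableSet s μ) (ht : NullMeasurableSet t μ) (hst : s ≤ᵐ[μ] t ∨ t ≤ᵐ[μ] s) :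
    |μ.real s - μ.real t| = μ.real (s ∆ t) := by
  wlog h : s ≤ᵐ[μ] t generalizing s t
  · rw [abs_sub_comm, symmDiff_comm]
    exact this ht hs hst.symm (hst.resolve_left h)
  have sdiff_null : μ (s \ t) = 0 := ae_le_set.1 h
  have symmDiff_eq : μ.real (s ∆ t) = μ.real (t \ s) := by
    rw [measureReal_def, measure_symmDiff_eq hs ht, sdiff_null, zero_add, ← measureReal_def]
  have split_s : μ.real (s ∩ t) = μ.real s := by
    rw [← measureReal_inter_add_sdiff₀ (s := s) ht, measureReal_def _ (s \ t), sdiff_null,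
      ENNReal.toReal_zero, add_zero]
  have split_t : μ.real (s ∩ t) + μ.real (t \ s) = μ.real t := by
    rw [inter_comm, measureReal_inter_add_sdiff₀ hs]
  rw [symmDiff_eq, ← split_t, split_s, sub_add_cancel_left, abs_neg,
    abs_of_nonneg measureReal_nonneg]

theorem integral_abs_measureReal_superlevel_sub [IsFiniteMeasure μ] {f g : α → ℝ}
    (hf : AEMeasurable f μ) (hg : AEMeasurable g μ)
    (hfg : ∀ u, {t | u < f t} ≤ᵐ[μ] {t | u < g t} ∨ {t | u < g t} ≤ᵐ[μ] {t | u < f t}) :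
    ∫ u, |μ.real {t | u < f t} - μ.real {t | u < g t}| = ∫ t, |f t - g t| ∂μ := by
  have measurable_tail (k : α → ℝ) : Measurable fun u ↦ μ.real {t | u < k t} :=
    Antitone.measurable fun u v huv ↦ measureReal_mono fun t ht ↦ huv.trans_lt ht
  have tail_gap (u : ℝ) : ENNReal.ofReal |μ.real {t | u < f t} - μ.real {t | u < g t}|
      = μ ({t | u < f t} ∆ {t | u < g t}) := by
    rw [abs_measureReal_sub_eq_measureReal_symmDiff (nullMeasurableSet_lt aemeasurable_const hf)
      (nullMeasurableSet_lt aemeasurable_const hg) (hfg u), ofReal_measureReal]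
  rw [integral_eq_lintegral_of_nonneg_ae (.of_forall fun _ ↦ abs_nonneg _)
      (by fun_prop : Measurable fun u ↦
        |μ.real {t | u < f t} - μ.real {t | u < g t}|).aestronglyMeasurable,
    integral_eq_lintegral_of_nonneg_ae (.of_forall fun _ ↦ abs_nonneg _)
      (by fun_prop : AEMeasurable (fun t ↦ |f t - g t|) μ).aestronglyMeasurable]
  simp only [tail_gap, lintegral_measure_superlevel_symmDiff hf hg]

lemma superlevel_ae_eq_of_notMem_Icc {γ : Type*} [LinearOrder γ] {f g : α → γ} {a b u : γ}
    (hf : ∀ᵐ t ∂μ, f t ∈ Icc a b) (hg : ∀ᵐ t ∂μ, g t ∈ Icc a b) (hu : u ∉ Icc a b) :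
    {t | u < f t} =ᵐ[μ] {t | u < g t} := by
  filter_upwards [hf, hg] with t hft hgt
  refine propext (?_ : u < f t ↔ u < g t)
  grind

lemma superlevel_ae_le_total_of_antitoneOn {γ : Type*} [LinearOrder α] [LinearOrder γ] {s : Set α}
    (hs : MeasurableSet s) {f g : α → γ} (hf : AntitoneOn f s) (hg : AntitoneOn g s) (u : γ) :
    {t | u < f t} ≤ᵐ[μ.restrict s] {t | u < g t} ∨
      {t | u < g t} ≤ᵐ[μ.restrict s] {t | u < f t} := by
  by_cases hnested : ∀ t ∈ s, u < f t → u < g t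
  · exact .inl (ae_restrict_of_forall_mem hs hnested)
  · obtain ⟨a, ha, hfa, hga⟩ : ∃ a ∈ s, u < f a ∧ g a ≤ u := by push Not at hnested; exact hnested
    refine .inr (ae_restrict_of_forall_mem hs fun t ht hgt ↦ ?_)
    have hta : t ≤ a := le_of_not_ge fun hat ↦ ((hg ha ht hat).trans hga).not_gt hgt
    exact hfa.trans_le (hf ht ha hta)

lemma measureReal_superlevel_eq_of_measure_sublevel_eq [IsFiniteMeasure μ] {f g : α → ℝ}
    (hf : AEMeasurable f μ) (hg : AEMeasurable g μ) {u : ℝ}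
    (hfg : μ {t | f t ≤ u} = μ {t | g t ≤ u}) :
    μ.real {t | u < f t} = μ.real {t | u < g t} := by
  have superlevel_eq {k : α → ℝ} (hk : AEMeasurable k μ) :
      μ.real {t | u < k t} = μ.real univ - μ.real {t | k t ≤ u} := by
    rw [← measureReal_compl₀ (nullMeasurableSet_le hk aemeasurable_const), compl_ofPred]
    simp only [not_le]
  rw [superlevel_eq hf, superlevel_eq hg, measureReal_def _ {t | f t ≤ u}, hfg, ← measureReal_def]

end LayerCake

namespace IsDecRearr

variable {h hstar : ℝ → ℝ}

lemma aemeasurable (hst : IsDecRearr h hstar) :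
    AEMeasurable hstar (volume.restrict (Icc (0 : ℝ) 1)) :=
  aemeasurable_restrict_of_antitoneOn measurableSet_Icc hst.1

lemma measureReal_superlevel (hst : IsDecRearr h hstar)
    (hh : AEMeasurable h (volume.restrict (Icc (0 : ℝ) 1))) {u : ℝ} (hu : u ∈ Icc (0 : ℝ) 1) :
    (volume.restrict (Icc (0 : ℝ) 1)).real {t | u < hstar t}
      = (volume {t ∈ Icc (0 : ℝ) 1 | u < h t}).toReal := by
  have restrict_ofPred (p : ℝ → Prop) :
      volume.restrict (Icc (0 : ℝ) 1) {t | p t} = volume {t ∈ Icc (0 : ℝ) 1 | p t} := by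
    rw [Measure.restrict_apply' measurableSet_Icc, inter_comm]
    rfl
  rw [← restrict_ofPred]
  refine measureReal_superlevel_eq_of_measure_sublevel_eq hst.aemeasurable hh ?_
  rw [restrict_ofPred, restrict_ofPred, hst.2.2 u hu]

end IsDecRearr

theorem upperLevel_L1_isometry_general {h g hstar gstar : ℝ → ℝ}
    (hh : AEMeasurable h (volume.restrict (Icc (0 : ℝ) 1)))
    (hg : AEMeasurable g (volume.restrict (Icc (0 : ℝ) 1)))
    (hst : IsDecRearr h hstar) (gst : IsDecRearr g gstar) :
    (∫ u in (0 : ℝ)..1,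
        |(volume {t ∈ Icc (0 : ℝ) 1 | u < h t}).toReal
          - (volume {t ∈ Icc (0 : ℝ) 1 | u < g t}).toReal|)
      = ∫ t in (0 : ℝ)..1, |hstar t - gstar t| := by
  set μ : Measure ℝ := volume.restrict (Icc (0 : ℝ) 1)
  have gap_eq_zero (u : ℝ) (hu : u ∉ Icc (0 : ℝ) 1) :
      |μ.real {t | u < hstar t} - μ.real {t | u < gstar t}| = 0 := by
    rw [measureReal_congr (superlevel_ae_eq_of_notMem_Icc
      (ae_restrict_of_forall_mem measurableSet_Icc hst.2.1)
      (ae_restrict_of_forall_mem measurableSet_Icc gst.2.1) hu), sub_self, abs_zero]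
  simp only [intervalIntegral.integral_of_le zero_le_one, ← integral_Icc_eq_integral_Ioc]
  calc _ = ∫ u in Icc (0 : ℝ) 1, |μ.real {t | u < hstar t} - μ.real {t | u < gstar t}| :=
        setIntegral_congr_fun measurableSet_Icc fun u hu ↦ by
          simp only [μ, hst.measureReal_superlevel hh hu, gst.measureReal_superlevel hg hu]
    _ = ∫ u, |μ.real {t | u < hstar t} - μ.real {t | u < gstar t}| :=
        setIntegral_eq_integral_of_forall_compl_eq_zero gap_eq_zero
    _ = ∫ t, |hstar t - gstar t| ∂μ :=
        integral_abs_measureReal_superlevel_sub hst.aemeasurable gst.aemeasurable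
          (superlevel_ae_le_total_of_antitoneOn measurableSet_Icc hst.1 gst.1)

/-- For measurable `h, g : [0,1] → [0,1]` with decreasing
rearrangements `h*, g*`:
`∫₀¹ |λ({t : h(t) > u}) − λ({t : g(t) > u})| du = ∫₀¹ |h*(t) − g*(t)| dt`
(the isometry `d₁(T(D), T(E)) = d₁(D↑, E↑)`, fiberwise). -/
theorem upperLevel_L1_isometry (h g hstar gstar : ℝ → ℝ)
    (hmeas : Measurable h) (gmeas : Measurable g)
    (hrange : ∀ t ∈ Icc (0:ℝ) 1, h t ∈ Icc (0:ℝ) 1)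
    (grange : ∀ t ∈ Icc (0:ℝ) 1, g t ∈ Icc (0:ℝ) 1)
    (hst : IsDecRearr h hstar) (gst : IsDecRearr g gstar) :
    (∫ u in (0:ℝ)..1,
        |(volume {t ∈ Icc (0:ℝ) 1 | u < h t}).toReal
          - (volume {t ∈ Icc (0:ℝ) 1 | u < g t}).toReal|)
      = ∫ t in (0:ℝ)..1, |hstar t - gstar t| :=
  upperLevel_L1_isometry_general hmeas.aemeasurable gmeas.aemeasurable hst gst

end
end

section
/- Let μ be a probability measure on ℝ whose cumulative distribution function F(x) = μ((−∞, x]) is continuous, and let G be the cumulative distribution function of the convolution μ ∗ μ (the law of the sum of two independent random variables each distributed according to μ). Define the quantile functions F⁻¹(t) := inf{x ∈ ℝ : F(x) ≥ t} and G⁻¹(v) := inf{x ∈ ℝ : G(x) ≥ v}. Then for every v ∈ (0,1): ∫₀¹ F(G⁻¹(v) − F⁻¹(t)) dt = v. -/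
open MeasureTheory Set

noncomputable section

/-- The cumulative distribution function of a measure on `ℝ`. -/
def cdfOf (μ : Measure ℝ) (x : ℝ) : ℝ := (μ (Iic x)).toReal

/-- The convolution `μ ∗ μ`: the law of the sum of two independent random
variables each distributed according to `μ`. -/
def convSelf (μ : Measure ℝ) : Measure ℝ :=
  Measure.map (fun p : ℝ × ℝ => p.1 + p.2) (μ.prod μ)

/-- The quantile function `F⁻¹(t) = inf {x : F x ≥ t}` of a distribution
function `F`. -/
def quantile (F : ℝ → ℝ) (t : ℝ) : ℝ := sInf {x : ℝ | t ≤ F x}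

/-!
If `U` is uniform on `(0, 1)`, then `F⁻¹(U)` has law `μ`, because `F⁻¹(t) ≤ x ↔ t ≤ F x` by
right-continuity of `F`. The integral `∫₀¹ F(x - F⁻¹(t)) dt` is therefore `∫ F(x - y) dμ(y)`, the
value at `x` of the distribution function `G` of `μ ∗ μ`. At `x = G⁻¹(v)` this is `v`, since `G`
inherits the continuity of `F`.
-/

open Filter ProbabilityTheory

section Quantile

variable (F : StieltjesFunction ℝ) {t : ℝ}

theorem le_apply_quantile (hne : {x | t ≤ F x}.Nonempty) : t ≤ F (quantile F t) := by
  have le_apply_of_gt : ∀ y > quantile F t, t ≤ F y := fun y hy =>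
    let ⟨_, hx, hxy⟩ := exists_lt_of_csInf_lt hne hy
    le_trans hx (F.mono hxy.le)
  exact ge_of_tendsto ((F.right_continuous _).mono Ioi_subset_Ici_self).tendsto
    (eventually_nhdsWithin_of_forall le_apply_of_gt)

theorem quantile_le_iff (hne : {x | t ≤ F x}.Nonempty) (hbdd : BddBelow {x | t ≤ F x}) {x : ℝ} :
    quantile F t ≤ x ↔ t ≤ F x :=
  ⟨fun h => (le_apply_quantile F hne).trans (F.mono h), fun h => csInf_le hbdd h⟩

theorem apply_quantile_of_mem_range (hbdd : BddBelow {x | t ≤ F x}) (ht : t ∈ range F) :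
    F (quantile F t) = t := by
  obtain ⟨y, rfl⟩ := ht
  have hy : y ∈ {x | F y ≤ F x} := le_refl (F y)
  exact le_antisymm (F.mono (csInf_le hbdd hy)) (le_apply_quantile F ⟨y, hy⟩)

end Quantile

section QuantileTransform

variable (μ : Measure ℝ) {t : ℝ}

theorem nonempty_setOf_le_cdf (ht : t < 1) : {x | t ≤ cdf μ x}.Nonempty :=
  ((tendsto_cdf_atTop μ).eventually_const_le ht).exists

theorem bddBelow_setOf_le_cdf (ht : 0 < t) : BddBelow {x | t ≤ cdf μ x} := by
  obtain ⟨a, ha⟩ := ((tendsto_cdf_atBot μ).eventually_lt_const ht).exists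
  exact ⟨a, fun x hx => ((monotone_cdf μ).reflect_lt (ha.trans_le hx)).le⟩

theorem quantile_cdf_le_iff (ht : t ∈ Ioo (0 : ℝ) 1) {x : ℝ} :
    quantile (cdf μ) t ≤ x ↔ t ≤ cdf μ x :=
  quantile_le_iff (cdf μ) (nonempty_setOf_le_cdf μ ht.2) (bddBelow_setOf_le_cdf μ ht.1)

theorem monotoneOn_quantile_cdf : MonotoneOn (quantile (cdf μ)) (Ioo 0 1) := fun _ hs _ ht hst =>
  (quantile_cdf_le_iff μ hs).2 (hst.trans ((quantile_cdf_le_iff μ ht).1 le_rfl))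

theorem aemeasurable_quantile_cdf :
    AEMeasurable (quantile (cdf μ)) (volume.restrict (Ioo 0 1)) :=
  aemeasurable_restrict_of_monotoneOn measurableSet_Ioo (monotoneOn_quantile_cdf μ)

theorem map_quantile_cdf [IsProbabilityMeasure μ] :
    (volume.restrict (Ioo 0 1)).map (quantile (cdf μ)) = μ := by
  have preimage_Iic (x : ℝ) :
      quantile (cdf μ) ⁻¹' Iic x ∩ Ioo 0 1 = Iic (cdf μ x) ∩ Ioo 0 1 :=
    Set.ext fun t => and_congr_left fun ht => quantile_cdf_le_iff μ ht
  refine (Measure.ext_of_Iic _ _ fun x => ?_).symm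
  calc μ (Iic x) = ENNReal.ofReal (cdf μ x) := (ofReal_cdf μ x).symm
    _ = volume (Iic (cdf μ x) ∩ Ioc 0 1) := by
      rw [inter_comm, Ioc_inter_Iic, inf_eq_right.2 (cdf_le_one μ x), Real.volume_Ioc, sub_zero]
    _ = volume (Iic (cdf μ x) ∩ Ioo 0 1) :=
      measure_congr ((ae_eq_refl _).inter Ioo_ae_eq_Ioc.symm)
    _ = (volume.restrict (Ioo 0 1)).map (quantile (cdf μ)) (Iic x) := by
      rw [Measure.map_apply_of_aemeasurable (aemeasurable_quantile_cdf μ) measurableSet_Iic,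
        Measure.restrict_apply' measurableSet_Ioo, preimage_Iic]

theorem integral_comp_quantile_cdf [IsProbabilityMeasure μ] {E : Type*} [NormedAddCommGroup E]
    [NormedSpace ℝ E] {f : ℝ → E} (hf : AEStronglyMeasurable f μ) :
    ∫ t in (0 : ℝ)..1, f (quantile (cdf μ) t) = ∫ x, f x ∂μ := by
  rw [intervalIntegral.integral_of_le zero_le_one, integral_Ioc_eq_integral_Ioo,
    ← integral_map (aemeasurable_quantile_cdf μ) (by rwa [map_quantile_cdf]), map_quantile_cdf]

end QuantileTransform

section Convolution

theorem measurable_cdf_sub (μ : Measure ℝ) (x : ℝ) : Measurable fun y => cdf μ (x - y) :=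
  (monotone_cdf μ).measurable.comp (by fun_prop)

variable (μ ν : Measure ℝ) [IsProbabilityMeasure μ] [IsProbabilityMeasure ν]

theorem cdf_conv (x : ℝ) : cdf (μ ∗ ν) x = ∫ y, cdf μ (x - y) ∂ν := by
  have measure_Iic : (μ ∗ ν) (Iic x) = ∫⁻ y, ENNReal.ofReal (cdf μ (x - y)) ∂ν := by
    rw [Measure.conv, Measure.map_apply measurable_add measurableSet_Iic,
      Measure.prod_apply_symm (measurable_add measurableSet_Iic)]
    simp only [ofReal_cdf, ← preimage_add_const_Iic, preimage_preimage]
  rw [cdf_eq_real, measureReal_def, measure_Iic, integral_eq_lintegral_of_nonneg_ae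
    (ae_of_all _ fun _ => cdf_nonneg _ _) (measurable_cdf_sub μ x).aestronglyMeasurable]

theorem continuous_cdf_conv (hμ : Continuous (cdf μ)) : Continuous (cdf (μ ∗ ν)) := by
  rw [funext (cdf_conv μ ν)]
  refine continuous_of_dominated (bound := fun _ => 1) (fun x => by fun_prop)
    (fun x => ae_of_all _ fun y => ?_) (integrable_const 1) (ae_of_all _ fun y => by fun_prop)
  rw [Real.norm_of_nonneg (cdf_nonneg _ _)]
  exact cdf_le_one _ _

theorem integral_cdf_sub_quantile_cdf (x : ℝ) :
    ∫ t in (0 : ℝ)..1, cdf μ (x - quantile (cdf ν) t) = cdf (μ ∗ ν) x := by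
  rw [cdf_conv, integral_comp_quantile_cdf ν (measurable_cdf_sub μ x).aestronglyMeasurable]

end Convolution

theorem Ioo_subset_range_cdf {μ : Measure ℝ} (hμ : Continuous (cdf μ)) :
    Ioo 0 1 ⊆ range (cdf μ) := fun _ ht =>
  mem_range_of_exists_le_of_exists_ge hμ
    ((tendsto_cdf_atBot μ).eventually_le_const ht.1).exists
    ((tendsto_cdf_atTop μ).eventually_const_le ht.2).exists

theorem cdfOf_eq_cdf (μ : Measure ℝ) [IsProbabilityMeasure μ] : cdfOf μ = cdf μ :=
  funext fun x => (cdf_eq_real μ x).symm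

theorem convSelf_eq_conv (μ : Measure ℝ) : convSelf μ = μ ∗ μ := rfl

theorem integral_cdf_convolution_quantile_general (μ ν : Measure ℝ) [IsProbabilityMeasure μ]
    [IsProbabilityMeasure ν] {v : ℝ} (hv : 0 < v) (hv_range : v ∈ range (cdf (μ ∗ ν))) :
    ∫ t in (0 : ℝ)..1, cdf μ (quantile (cdf (μ ∗ ν)) v - quantile (cdf ν) t) = v := by
  rw [integral_cdf_sub_quantile_cdf,
    apply_quantile_of_mem_range _ (bddBelow_setOf_le_cdf _ hv) hv_range]

/-- Let `μ` be a probability measure on `ℝ` with continuous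
cdf `F`, and let `G` be the cdf of `μ ∗ μ`. Then for every `v ∈ (0,1)`:
`∫₀¹ F(G⁻¹(v) − F⁻¹(t)) dt = v`. -/
theorem integral_cdf_convolution_quantile (μ : Measure ℝ) [IsProbabilityMeasure μ]
    (hF : Continuous (cdfOf μ)) :
    ∀ v ∈ Ioo (0:ℝ) 1,
      (∫ t in (0:ℝ)..1,
        cdfOf μ (quantile (cdfOf (convSelf μ)) v - quantile (cdfOf μ) t)) = v := by
  simp only [convSelf_eq_conv, cdfOf_eq_cdf] at hF ⊢
  exact fun v hv => integral_cdf_convolution_quantile_general μ μ hv.1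
    (Ioo_subset_range_cdf (continuous_cdf_conv μ μ hF) hv)

end
end

section
/- Let h, g : [0,1] → [0,1] be Lebesgue-measurable with ∫₀¹ h(t) dt = ∫₀¹ g(t) dt, and let h*, g* be decreasing rearrangements of h and g. Then the following are equivalent: (1) ∫₀ᵛ h*(t) dt ≤ ∫₀ᵛ g*(t) dt for every v ∈ [0,1] (the Schur order h ≺_S g); (2) ∫₀¹ min(h(t), u) dt ≥ ∫₀¹ min(g(t), u) dt for every u ∈ [0,1]. (Applied fiberwise to derivative families of copulas D, E, this shows that D ≤_{∂₂S} E, the pointwise reversed order T(D) ≥_lo T(E) of upper products with Π, and the pointwise order T²(D) ≤_lo T²(E) of increasing rearranged copulas are all equivalent.) -/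
open MeasureTheory Set

noncomputable section

/-!
For an antitone `f` on `[a, b]` and a level `u`, the partial integral `∫ t in a..v, (f t - u)` is
largest when `v` is a point at which `f` crosses `u`, and its maximal value is
`∫ t in a..b, max (f t - u) 0`. Hence the partial integrals of `f` are dominated by those of `g`
exactly when their excess integrals over all levels are; to bound the partial integrals up to `v`,
the level `u = g v` suffices. The excess integral of `f` is `∫ f - ∫ min f u` and depends only on
the distribution of `f`, so for equal means this comparison is the reversed one between truncated
integrals, and it can be read off any equimeasurable functions.
-/

open ProbabilityTheory

lemma exists_crossing_of_antitoneOn {α β : Type*} [ConditionallyCompleteLinearOrder α]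
    [LinearOrder β] {a b : α} {f : α → β} (hab : a ≤ b) (hf : AntitoneOn f (Icc a b)) (u : β) :
    ∃ v ∈ Icc a b, (∀ t ∈ Ioo a v, u ≤ f t) ∧ ∀ t ∈ Ioo v b, f t ≤ u := by
  set s : Set α := insert a {t ∈ Icc a b | u < f t}
  have hs_ne : s.Nonempty := insert_nonempty _ _
  have hs_le : ∀ t ∈ s, t ≤ b := by
    rintro t (rfl | ht)
    exacts [hab, ht.1.2]
  have hs_bdd : BddAbove s := ⟨b, hs_le⟩
  have hav : a ≤ sSup s := le_csSup hs_bdd (mem_insert _ _)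
  have hvb : sSup s ≤ b := csSup_le hs_ne hs_le
  refine ⟨sSup s, ⟨hav, hvb⟩, fun t ht ↦ ?_, fun t ht ↦ ?_⟩
  · obtain ⟨w, rfl | ⟨hw, huw⟩, htw⟩ := exists_lt_of_lt_csSup hs_ne ht.2
    · exact absurd ht.1 htw.not_gt
    · exact huw.le.trans (hf ⟨ht.1.le, htw.le.trans hw.2⟩ hw htw.le)
  · by_contra! hut
    exact ht.1.not_ge (le_csSup hs_bdd (.inr ⟨⟨hav.trans ht.1.le, ht.2.le⟩, hut⟩))

lemma integral_min_eq_of_identDistrib {Ω Ω' : Type*} [MeasurableSpace Ω] [MeasurableSpace Ω']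
    {P : Measure Ω} {Q : Measure Ω'} [IsFiniteMeasure Q] {X : Ω → ℝ} {Y : Ω' → ℝ}
    (hXY : IdentDistrib X Y P Q) (hY : Integrable Y Q) (u : ℝ) :
    ∫ ω, min (X ω) u ∂P = (∫ ω, X ω ∂P) - ∫ ω, max (Y ω - u) 0 ∂Q := by
  have hmin : ∫ ω, min (X ω) u ∂P = ∫ ω, min (Y ω) u ∂Q :=
    (hXY.comp (measurable_id.min measurable_const)).integral_eq
  have hpos : Integrable (fun ω ↦ max (Y ω - u) 0) Q := (hY.sub (integrable_const u)).pos_part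
  rw [hmin, hXY.integral_eq, ← integral_sub hY hpos]
  congr with ω
  grind

section

variable {μ : Measure ℝ} {a b v : ℝ} {f g φ : ℝ → ℝ}

lemma integral_le_integral_max_zero (hv : v ∈ Icc a b) (hφ : IntervalIntegrable φ μ a b) :
    ∫ t in a..v, φ t ∂μ ≤ ∫ t in a..b, max (φ t) 0 ∂μ := by
  have hpos : IntervalIntegrable (fun t ↦ max (φ t) 0) μ a b := ⟨hφ.1.pos_part, hφ.2.pos_part⟩
  have hsub : uIcc a v ⊆ uIcc a b := uIcc_subset_uIcc_left (Icc_subset_uIcc hv)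
  calc ∫ t in a..v, φ t ∂μ ≤ ∫ t in a..v, max (φ t) 0 ∂μ :=
        intervalIntegral.integral_mono_on hv.1 (hφ.mono_set hsub) (hpos.mono_set hsub)
          fun t _ ↦ le_max_left _ _
    _ ≤ ∫ t in a..b, max (φ t) 0 ∂μ :=
        intervalIntegral.integral_mono_interval le_rfl hv.1 hv.2
          (ae_of_all _ fun _ ↦ le_max_right _ _) hpos

lemma integral_max_zero_eq_integral [NullSingletonClass μ] (hv : v ∈ Icc a b)
    (hφ : IntervalIntegrable φ μ a b) (hnonneg : ∀ t ∈ Ioo a v, 0 ≤ φ t)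
    (hnonpos : ∀ t ∈ Ioo v b, φ t ≤ 0) :
    ∫ t in a..b, max (φ t) 0 ∂μ = ∫ t in a..v, φ t ∂μ := by
  have hpos : IntervalIntegrable (fun t ↦ max (φ t) 0) μ a b := ⟨hφ.1.pos_part, hφ.2.pos_part⟩
  have hv' : v ∈ uIcc a b := Icc_subset_uIcc hv
  have left : ∫ t in a..v, max (φ t) 0 ∂μ = ∫ t in a..v, φ t ∂μ :=
    intervalIntegral.integral_congr_Ioo_of_le hv.1 fun t ht ↦ max_eq_left (hnonneg t ht)
  have right : ∫ t in v..b, max (φ t) 0 ∂μ = ∫ _ in v..b, 0 ∂μ :=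
    intervalIntegral.integral_congr_Ioo_of_le hv.2 fun t ht ↦ max_eq_right (hnonpos t ht)
  rw [← intervalIntegral.integral_add_adjacent_intervals
      (hpos.mono_set (uIcc_subset_uIcc_left hv')) (hpos.mono_set (uIcc_subset_uIcc_right hv')),
    left, right, intervalIntegral.integral_zero, add_zero]

lemma integral_sub_const_le_integral_sub_const_iff [IsLocallyFiniteMeasure μ]
    (hf : IntervalIntegrable f μ a b) (hg : IntervalIntegrable g μ a b) (u : ℝ) :
    ∫ t in a..b, (f t - u) ∂μ ≤ ∫ t in a..b, (g t - u) ∂μ ↔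
      ∫ t in a..b, f t ∂μ ≤ ∫ t in a..b, g t ∂μ := by
  rw [intervalIntegral.integral_sub hf intervalIntegrable_const,
    intervalIntegral.integral_sub hg intervalIntegrable_const, sub_le_sub_iff_right]

variable [IsLocallyFiniteMeasure μ] [NullSingletonClass μ]

theorem forall_integral_le_iff_forall_integral_max_sub_le {S : Set ℝ} (hab : a ≤ b)
    (hf : AntitoneOn f (Icc a b)) (hg : AntitoneOn g (Icc a b)) (hgS : MapsTo g (Icc a b) S) :
    (∀ v ∈ Icc a b, ∫ t in a..v, f t ∂μ ≤ ∫ t in a..v, g t ∂μ) ↔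
      ∀ u ∈ S, ∫ t in a..b, max (f t - u) 0 ∂μ ≤ ∫ t in a..b, max (g t - u) 0 ∂μ := by
  have integrable {k : ℝ → ℝ} (hk : AntitoneOn k (Icc a b)) : IntervalIntegrable k μ a b :=
    AntitoneOn.intervalIntegrable (by rwa [uIcc_of_le hab])
  have excess_integrable {k : ℝ → ℝ} (hk : AntitoneOn k (Icc a b)) (u : ℝ) :
      IntervalIntegrable (fun t ↦ k t - u) μ a b :=
    (integrable hk).sub intervalIntegrable_const
  have excess_le_iff {v : ℝ} (hv : v ∈ Icc a b) (u : ℝ) :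
      ∫ t in a..v, (f t - u) ∂μ ≤ ∫ t in a..v, (g t - u) ∂μ ↔
        ∫ t in a..v, f t ∂μ ≤ ∫ t in a..v, g t ∂μ :=
    have hsub : uIcc a v ⊆ uIcc a b := uIcc_subset_uIcc_left (Icc_subset_uIcc hv)
    integral_sub_const_le_integral_sub_const_iff ((integrable hf).mono_set hsub)
      ((integrable hg).mono_set hsub) u
  constructor
  · intro hle u _
    obtain ⟨v, hv, hu_le, hle_u⟩ := exists_crossing_of_antitoneOn hab hf u
    calc ∫ t in a..b, max (f t - u) 0 ∂μ = ∫ t in a..v, (f t - u) ∂μ :=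
          integral_max_zero_eq_integral hv (excess_integrable hf u)
            (fun t ht ↦ sub_nonneg.2 (hu_le t ht)) fun t ht ↦ sub_nonpos.2 (hle_u t ht)
      _ ≤ ∫ t in a..v, (g t - u) ∂μ := (excess_le_iff hv u).2 (hle v hv)
      _ ≤ ∫ t in a..b, max (g t - u) 0 ∂μ :=
          integral_le_integral_max_zero hv (excess_integrable hg u)
  · intro hle v hv
    refine (excess_le_iff hv (g v)).1 ?_
    calc ∫ t in a..v, (f t - g v) ∂μ ≤ ∫ t in a..b, max (f t - g v) 0 ∂μ :=
          integral_le_integral_max_zero hv (excess_integrable hf _)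
      _ ≤ ∫ t in a..b, max (g t - g v) 0 ∂μ := hle _ (hgS hv)
      _ = ∫ t in a..v, (g t - g v) ∂μ :=
          integral_max_zero_eq_integral hv (excess_integrable hg _)
            (fun t ht ↦ sub_nonneg.2 (hg ⟨ht.1.le, ht.2.le.trans hv.2⟩ hv ht.2.le))
            fun t ht ↦ sub_nonpos.2 (hg hv ⟨hv.1.trans ht.1.le, ht.2.le⟩ ht.1.le)

theorem schur_order_iff_upperProductTransform_ge_general {Ω Ω' : Type*} [MeasurableSpace Ω]
    [MeasurableSpace Ω'] {P : Measure Ω} {Q : Measure Ω'} {h : Ω → ℝ} {g : Ω' → ℝ}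
    {hstar gstar : ℝ → ℝ} {S : Set ℝ} (hab : a ≤ b)
    (hanti : AntitoneOn hstar (Icc a b)) (ganti : AntitoneOn gstar (Icc a b))
    (hdistrib : IdentDistrib h hstar P (μ.restrict (Ioc a b)))
    (gdistrib : IdentDistrib g gstar Q (μ.restrict (Ioc a b)))
    (hmean : ∫ ω, h ω ∂P = ∫ ω, g ω ∂Q) (hS : MapsTo gstar (Icc a b) S) :
    (∀ v ∈ Icc a b, ∫ t in a..v, hstar t ∂μ ≤ ∫ t in a..v, gstar t ∂μ) ↔
      ∀ u ∈ S, ∫ ω, min (g ω) u ∂Q ≤ ∫ ω, min (h ω) u ∂P := by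
  have hint : IntervalIntegrable hstar μ a b :=
    AntitoneOn.intervalIntegrable (by rwa [uIcc_of_le hab])
  have gint : IntervalIntegrable gstar μ a b :=
    AntitoneOn.intervalIntegrable (by rwa [uIcc_of_le hab])
  have : IsFiniteMeasure (μ.restrict (Ioc a b)) :=
    isFiniteMeasure_restrict.2 measure_Ioc_lt_top.ne
  simp only [integral_min_eq_of_identDistrib hdistrib hint.1,
    integral_min_eq_of_identDistrib gdistrib gint.1, hmean, sub_le_sub_iff_left,
    ← intervalIntegral.integral_of_le hab]
  exact forall_integral_le_iff_forall_integral_max_sub_le hab hanti ganti hS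

end

lemma IsDecRearr.identDistrib {h hstar : ℝ → ℝ} (hst : IsDecRearr h hstar)
    (hmeas : AEMeasurable h (volume.restrict (Ioc 0 1)))
    (hrange : MapsTo h (Icc 0 1) (Icc 0 1)) :
    IdentDistrib h hstar (volume.restrict (Ioc 0 1)) (volume.restrict (Ioc 0 1)) := by
  obtain ⟨hanti, hstar_range, hvol⟩ := hst
  rw [Measure.restrict_congr_set Ioc_ae_eq_Icc] at hmeas ⊢
  have hstar_meas : AEMeasurable hstar (volume.restrict (Icc 0 1)) :=
    aemeasurable_restrict_of_antitoneOn measurableSet_Icc hanti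
  refine ⟨hmeas, hstar_meas, Measure.ext_of_Iic _ _ fun y ↦ ?_⟩
  rw [Measure.map_apply_of_aemeasurable hmeas measurableSet_Iic,
    Measure.map_apply_of_aemeasurable hstar_meas measurableSet_Iic,
    Measure.restrict_apply' measurableSet_Icc, Measure.restrict_apply' measurableSet_Icc,
    inter_comm, inter_comm _ (Icc 0 1)]
  change volume {t ∈ Icc 0 1 | h t ≤ y} = volume {t ∈ Icc 0 1 | hstar t ≤ y}
  by_cases hy : y ∈ Icc 0 1
  · exact (hvol y hy).symm
  · congr 1 with t
    refine and_congr_right fun ht ↦ ?_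
    have h_mem := hrange ht
    have hstar_mem := hstar_range t ht
    grind

/-- Let `h, g : [0,1] → [0,1]` be measurable with
`∫₀¹ h = ∫₀¹ g` and decreasing rearrangements `h*, g*`. Then the Schur order
`h ≺_S g` (i.e. `∫₀ᵛ h* ≤ ∫₀ᵛ g*` for all `v ∈ [0,1]`) holds if and only if
`∫₀¹ min(h(t), u) dt ≥ ∫₀¹ min(g(t), u) dt` for every `u ∈ [0,1]`
(fiberwise: `D ≤_{∂₂S} E` ⟺ `T(D) ≥_lo T(E)` ⟺ `T²(D) ≤_lo T²(E)`). -/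
theorem schur_order_iff_upperProductTransform_ge (h g hstar gstar : ℝ → ℝ)
    (hmeas : Measurable h) (gmeas : Measurable g)
    (hrange : ∀ t ∈ Icc (0:ℝ) 1, h t ∈ Icc (0:ℝ) 1)
    (grange : ∀ t ∈ Icc (0:ℝ) 1, g t ∈ Icc (0:ℝ) 1)
    (hmean : (∫ t in (0:ℝ)..1, h t) = ∫ t in (0:ℝ)..1, g t)
    (hst : IsDecRearr h hstar) (gst : IsDecRearr g gstar) :
    (∀ v ∈ Icc (0:ℝ) 1, (∫ t in (0:ℝ)..v, hstar t) ≤ ∫ t in (0:ℝ)..v, gstar t)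
      ↔ (∀ u ∈ Icc (0:ℝ) 1,
          (∫ t in (0:ℝ)..1, min (g t) u) ≤ ∫ t in (0:ℝ)..1, min (h t) u) := by
  simpa only [intervalIntegral.integral_of_le zero_le_one] using
    schur_order_iff_upperProductTransform_ge_general zero_le_one hst.1 gst.1
      (hst.identDistrib hmeas.aemeasurable hrange) (gst.identDistrib gmeas.aemeasurable grange)
      (by simpa only [intervalIntegral.integral_of_le zero_le_one] using hmean) gst.2.1

end
end
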